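/- Suppose the seminorm N satisfies N(ν) ≤ Σ_{f∈F} d(f)|ν(f)| for every finite signed measure ν, where F is a countable family of measurable functions satisfying Assumption 1 and the d(f) are positive constants with Σ_{f∈F} d(f)‖f‖ < ∞. Suppose there is a positive sequence (b_n) such that P[N(P_n − Q_n) ≤ b_n] → 0 as n → ∞, and b_n^{−1}·[n^{−ρ̄/2}(1 + ln(n)·1{γ−1+ρ̄/2 = 0}) + n^{γ−1}] → 0 as n → ∞. Then θ̂_n − θ = O_p(n^{−1} b_n^{−2/ρ̄}). -/

import Mathlib

open MeasureTheory Filter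

/-- The integral `ν(f) = ∫ f dν` of a function against a finite signed measure,
via the Jordan decomposition. -/
noncomputable def sIntegral {E : Type*} [MeasurableSpace E] (ν : SignedMeasure E) (f : E → ℝ) : ℝ :=
  ∫ x, f x ∂ν.toJordanDecomposition.posPart - ∫ x, f x ∂ν.toJordanDecomposition.negPart

/-- Covariance of two real random variables. -/
noncomputable def covar {Ω : Type*} [MeasurableSpace Ω] (μ : Measure Ω) (Y Z : Ω → ℝ) : ℝ :=
  ∫ ω, (Y ω - ∫ ω', Y ω' ∂μ) * (Z ω - ∫ ω', Z ω' ∂μ) ∂μ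

/-- Variance of a real random variable. -/
noncomputable def variance' {Ω : Type*} [MeasurableSpace Ω] (μ : Measure Ω) (Y : Ω → ℝ) : ℝ :=
  covar μ Y Y

/-- `A_n = O_p(c_n)`: `lim_{M→∞} limsup_{n→∞} P(|A_n| > M c_n) = 0`. -/
def IsOp {Ω : Type*} [MeasurableSpace Ω] (μ : Measure Ω) (A : ℕ → Ω → ℝ) (c : ℕ → ℝ) : Prop :=
  Tendsto (fun M : ℝ => Filter.limsup (fun n => μ {ω | M * c n < |A n ω|}) atTop)
    atTop (nhds 0)

/-! Covariances decaying like `|i - j| ^ (-r)` with `r < 1` give a block sum of length `t` a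
second moment of order `t ^ (2 - r)`, hence a maximal inequality with exponent `1 - r / 2` for the
partial sums of each function; weighting by `d` and summing over `F` carries it over to `N`. A
maximizer far from the change point `τ` must overcome a drift which is linear in the split up to
`τ`, so the centred partial sums have to fluctuate a lot between the maximizer and `τ`, near the
ends of the sample against the weight, or at `τ` itself. Markov's inequality along dyadic distances
bounds all three; splits to the right of `τ` are handled by reflection.

Unbounded functions in `F` carry no moment information, but the finiteness of `N` makes them
irrelevant: by Baire category there is a signed measure `ν` such that the integrals of all
unbounded functions against `ν` and `μ - ν / (j + 1)` are undefined, so that `sIntegral` takes its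
junk value `0` on them. Letting `j → ∞` bounds `N μ` by the moments of the bounded functions alone.
-/

section SignedIntegral

variable {E : Type*} [MeasurableSpace E] {f : E → ℝ}

theorem memLp_of_isBounded_range (hf : Measurable f) (hb : Bornology.IsBounded (Set.range f))
    (p : ENNReal) (μ : Measure E) [IsFiniteMeasure μ] : MemLp f p μ := by
  obtain ⟨M, hM⟩ := hb.exists_norm_le
  exact MemLp.of_bound hf.aestronglyMeasurable M (ae_of_all _ fun x => hM _ ⟨x, rfl⟩)

theorem integrable_of_isBounded_range (hf : Measurable f) (hb : Bornology.IsBounded (Set.range f))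
    (μ : Measure E) [IsFiniteMeasure μ] : Integrable f μ :=
  (memLp_of_isBounded_range hf hb 1 μ).integrable le_rfl

theorem sIntegral_toSignedMeasure_sub (A B : Measure E) [IsFiniteMeasure A] [IsFiniteMeasure B]
    (hA : Integrable f A) (hB : Integrable f B) :
    sIntegral (A.toSignedMeasure - B.toSignedMeasure) f = ∫ x, f x ∂A - ∫ x, f x ∂B := by
  have hJordan : (A - B) + B = (B - A) + A := by
    rw [← Measure.toSignedMeasure_eq_toSignedMeasure_iff, Measure.toSignedMeasure_add,
      Measure.toSignedMeasure_add, add_comm (B - A).toSignedMeasure, ← sub_eq_sub_iff_add_eq_add]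
    exact Measure.sub_toSignedMeasure_eq_toSignedMeasure_sub.symm
  have hint := congrArg (fun μ : Measure E => ∫ x, f x ∂μ) hJordan
  simp only [integral_add_measure (hA.mono_measure Measure.sub_le) hB,
    integral_add_measure (hB.mono_measure Measure.sub_le) hA] at hint
  rw [sIntegral, Measure.toJordanDecomposition_toSignedMeasure_sub,
    Measure.jordanDecompositionOfToSignedMeasureSub_posPart,
    Measure.jordanDecompositionOfToSignedMeasureSub_negPart]
  linarith

theorem sIntegral_add (hf : Measurable f) (hb : Bornology.IsBounded (Set.range f))
    (μ ν : SignedMeasure E) : sIntegral (μ + ν) f = sIntegral μ f + sIntegral ν f := by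
  have hint := integrable_of_isBounded_range hf hb
  have hsplit : μ + ν = (μ.toJordanDecomposition.posPart
      + ν.toJordanDecomposition.posPart).toSignedMeasure -
      (μ.toJordanDecomposition.negPart + ν.toJordanDecomposition.negPart).toSignedMeasure := by
    rw [Measure.toSignedMeasure_add, Measure.toSignedMeasure_add, add_sub_add_comm]
    exact congrArg₂ (· + ·) μ.toSignedMeasure_toJordanDecomposition.symm
      ν.toSignedMeasure_toJordanDecomposition.symm
  conv_lhs => rw [hsplit]
  rw [sIntegral_toSignedMeasure_sub _ _ (hint _) (hint _),
    integral_add_measure (hint _) (hint _), integral_add_measure (hint _) (hint _)]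
  exact add_sub_add_comm _ _ _ _

theorem sIntegral_smul (c : ℝ) (μ : SignedMeasure E) (f : E → ℝ) :
    sIntegral (c • μ) f = c * sIntegral μ f := by
  unfold sIntegral
  rw [SignedMeasure.toJordanDecomposition_smul_real]
  rcases le_or_gt 0 c with hc | hc
  · rw [JordanDecomposition.real_smul_posPart_nonneg _ _ hc,
      JordanDecomposition.real_smul_negPart_nonneg _ _ hc, integral_smul_nnreal_measure,
      integral_smul_nnreal_measure]
    simp only [NNReal.smul_def, Real.coe_toNNReal _ hc, smul_eq_mul]
    ring
  · rw [JordanDecomposition.real_smul_posPart_neg _ _ hc,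
      JordanDecomposition.real_smul_negPart_neg _ _ hc, integral_smul_nnreal_measure,
      integral_smul_nnreal_measure]
    simp only [NNReal.smul_def, Real.coe_toNNReal _ (neg_nonneg.2 hc.le), smul_eq_mul]
    ring

/-- The linear functional `ν ↦ ν(f)`. Boundedness of `f` is what makes it additive: otherwise
the integrals defining `sIntegral ν f` take the junk value `0` for some `ν`. -/
noncomputable def sIntegralLinear (f : E → ℝ) (hf : Measurable f)
    (hb : Bornology.IsBounded (Set.range f)) : SignedMeasure E →ₗ[ℝ] ℝ where
  toFun ν := sIntegral ν f
  map_add' := sIntegral_add hf hb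
  map_smul' c ν := sIntegral_smul c ν f

end SignedIntegral

section UnboundedFunctions

variable {E : Type*} [MeasurableSpace E] {f : E → ℝ}

theorem integral_eq_zero_of_tail (μ : Measure E)
    (h : ∀ M : ℝ, ∃ l : ℕ, M < l * μ.real {x | (l : ℝ) ≤ |f x|}) : ∫ x, f x ∂μ = 0 := by
  refine integral_undef fun hf => ?_
  obtain ⟨l, hl⟩ := h (∫ x, |f x| ∂μ)
  exact hl.not_ge
    (mul_meas_ge_le_integral_of_nonneg (ae_of_all _ fun x => abs_nonneg (f x)) hf.abs l)

theorem measurableSet_tail (hf : Measurable f) (l : ℕ) : MeasurableSet {x | (l : ℝ) ≤ |f x|} :=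
  measurableSet_le measurable_const hf.abs

theorem sIntegral_eq_zero_of_tail (hf : Measurable f) (ν : SignedMeasure E)
    (hpos : ∀ M : ℝ, ∃ l : ℕ, M < l * ν {x | (l : ℝ) ≤ |f x|})
    (hneg : ∀ M : ℝ, ∃ l : ℕ, M < l * -ν {x | (l : ℝ) ≤ |f x|}) : sIntegral ν f = 0 := by
  have hν := fun l : ℕ => ν.apply_eq_posPart_real_sub_negPart_real (measurableSet_tail hf l)
  rw [sIntegral, integral_eq_zero_of_tail, integral_eq_zero_of_tail, sub_zero]
  · intro M
    obtain ⟨l, hl⟩ := hneg M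
    refine ⟨l, hl.trans_le (mul_le_mul_of_nonneg_left ?_ (Nat.cast_nonneg l))⟩
    rw [hν, neg_sub]
    exact sub_le_self _ measureReal_nonneg
  · intro M
    obtain ⟨l, hl⟩ := hpos M
    refine ⟨l, hl.trans_le (mul_le_mul_of_nonneg_left ?_ (Nat.cast_nonneg l))⟩
    rw [hν]
    exact sub_le_self _ measureReal_nonneg

theorem tendsto_signedMeasure_tail (hf : Measurable f) (ν : SignedMeasure E) :
    Tendsto (fun l : ℕ => ν {x | (l : ℝ) ≤ |f x|}) atTop (nhds 0) := by
  have htendsto := VectorMeasure.tendsto_vectorMeasure_iInter_atTop_nat (v := ν)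
    (s := fun l : ℕ => {x | (l : ℝ) ≤ |f x|})
    (fun i j hij x (hx : (j : ℝ) ≤ |f x|) => (Nat.cast_le.2 hij).trans hx)
    (measurableSet_tail hf)
  have hempty : ⋂ l : ℕ, {x | (l : ℝ) ≤ |f x|} = ∅ :=
    Set.eq_empty_of_forall_notMem fun x hx =>
      (exists_nat_gt |f x|).elim fun l hl => hl.not_ge (Set.mem_iInter.1 hx l)
  rwa [hempty, VectorMeasure.empty] at htendsto

theorem exists_L1_norm_eq_setIntegral_eq (m : Measure E) [IsFiniteMeasure m] {A : Set E}
    (hA : MeasurableSet A) (hmA : m A ≠ 0) (η : ℝ) :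
    ∃ g : E →₁[m] ℝ, ‖g‖ = |η| ∧ ∫ x in A, g x ∂m = η := by
  have hpos : 0 < m.real A := ENNReal.toReal_pos hmA (measure_ne_top _ _)
  refine ⟨indicatorConstLp 1 hA (measure_ne_top m _) (η / m.real A), ?_, ?_⟩
  · rw [norm_indicatorConstLp one_ne_zero ENNReal.one_ne_top, ENNReal.toReal_one, div_one,
      Real.rpow_one, Real.norm_eq_abs, abs_div, abs_of_pos hpos, div_mul_cancel₀ _ hpos.ne']
  · have hconst : ∀ᵐ x ∂m, x ∈ A →
        indicatorConstLp 1 hA (measure_ne_top m _) (η / m.real A) x = η / m.real A :=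
      indicatorConstLp_coeFn_mem
    rw [setIntegral_congr_ae hA hconst, setIntegral_const, smul_eq_mul,
      mul_div_cancel₀ _ hpos.ne']

theorem continuous_withDensityᵥ_apply (m : Measure E) {A : Set E} (hA : MeasurableSet A) :
    Continuous fun r : E →₁[m] ℝ => m.withDensityᵥ r A := by
  simp only [withDensityᵥ_apply (L1.integrable_coeFn _) hA]
  exact continuous_setIntegral A

theorem withDensityᵥ_coeFn_add (m : Measure E) (r g : E →₁[m] ℝ) :
    m.withDensityᵥ (r + g : E →₁[m] ℝ) = m.withDensityᵥ r + m.withDensityᵥ g := by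
  rw [← withDensityᵥ_add (L1.integrable_coeFn r) (L1.integrable_coeFn g)]
  exact WithDensityᵥEq.congr_ae (Lp.coeFn_add r g)

theorem dense_setOf_tail_blowup (hf : Measurable f) (m : Measure E) [IsFiniteMeasure m]
    (hpos : ∀ l : ℕ, m {x | (l : ℝ) ≤ |f x|} ≠ 0) (μ : SignedMeasure E) {c : ℝ} (hc : c ≠ 0)
    (M : ℝ) :
    Dense {r : E →₁[m] ℝ | ∃ l : ℕ, M < l * (μ + c • m.withDensityᵥ r) {x | (l : ℝ) ≤ |f x|}} := by
  refine Metric.dense_iff.2 fun r ε hε => ?_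
  set t : ℝ := |c| * (ε / 2) with ht
  have ht0 : 0 < t := by positivity
  have htail := tendsto_signedMeasure_tail hf (μ + c • m.withDensityᵥ r)
  obtain ⟨l, hrl, hMl⟩ := ((htail.eventually (lt_mem_nhds (neg_lt_zero.2 (half_pos ht0)))).and
    (tendsto_natCast_atTop_atTop.eventually_gt_atTop (M / (t / 2)))).exists
  obtain ⟨g, hg, hgA⟩ := exists_L1_norm_eq_setIntegral_eq m (measurableSet_tail hf l) (hpos l)
    (t / c)
  refine ⟨r + g, ?_, l, ?_⟩
  · rw [Metric.mem_ball, dist_eq_norm, add_sub_cancel_left, hg, abs_div, ht, abs_mul, abs_abs,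
      mul_div_cancel_left₀ _ (abs_ne_zero.2 hc), abs_of_pos (half_pos hε)]
    exact half_lt_self hε
  · have happly : (μ + c • m.withDensityᵥ (r + g : E →₁[m] ℝ)) {x | (l : ℝ) ≤ |f x|}
        = (μ + c • m.withDensityᵥ r) {x | (l : ℝ) ≤ |f x|} + t := by
      rw [withDensityᵥ_coeFn_add, smul_add, ← add_assoc, add_apply,
        smul_apply, withDensityᵥ_apply (L1.integrable_coeFn g)
          (measurableSet_tail hf l), hgA, smul_eq_mul, mul_div_cancel₀ _ hc]
    rw [happly]
    calc M < l * (t / 2) := (div_lt_iff₀ (half_pos ht0)).1 hMl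
      _ ≤ _ := mul_le_mul_of_nonneg_left (by linarith) (Nat.cast_nonneg l)

theorem eventually_residual_tail_blowup (hf : Measurable f) (m : Measure E) [IsFiniteMeasure m]
    (hpos : ∀ l : ℕ, m {x | (l : ℝ) ≤ |f x|} ≠ 0) (μ : SignedMeasure E) {c : ℝ} (hc : c ≠ 0) :
    ∀ᶠ r : E →₁[m] ℝ in residual (E →₁[m] ℝ),
      ∀ M : ℝ, ∃ l : ℕ, M < l * (μ + c • m.withDensityᵥ r) {x | (l : ℝ) ≤ |f x|} := by
  have hnat : ∀ᶠ r : E →₁[m] ℝ in residual (E →₁[m] ℝ), ∀ K : ℕ,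
      ∃ l : ℕ, (K : ℝ) < l * (μ + c • m.withDensityᵥ r) {x | (l : ℝ) ≤ |f x|} := by
    refine eventually_countable_forall.2 fun K =>
      residual_of_dense_open ?_ (dense_setOf_tail_blowup hf m hpos μ hc K)
    simp only [Set.ofPred_exists, add_apply, smul_apply]
    exact isOpen_iUnion fun l => isOpen_lt continuous_const <| continuous_const.mul <|
      continuous_const.add <|
        (continuous_withDensityᵥ_apply m (measurableSet_tail hf l)).const_smul c
  refine hnat.mono fun r hr M => ?_
  obtain ⟨K, hK⟩ := exists_nat_ge M
  exact (hr K).imp fun l hl => hK.trans_lt hl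

/-- An unbounded `f` is not integrable against `|μ + c r|` for a generic density `r`, so that
`sIntegral` returns its junk value. -/
theorem eventually_residual_sIntegral_eq_zero (hf : Measurable f) (m : Measure E)
    [IsFiniteMeasure m] (hpos : ∀ l : ℕ, m {x | (l : ℝ) ≤ |f x|} ≠ 0) (μ : SignedMeasure E)
    {c : ℝ} (hc : c ≠ 0) :
    ∀ᶠ r : E →₁[m] ℝ in residual (E →₁[m] ℝ), sIntegral (μ + c • m.withDensityᵥ r) f = 0 := by
  filter_upwards [eventually_residual_tail_blowup hf m hpos μ hc,
    eventually_residual_tail_blowup hf m hpos (-μ) (neg_ne_zero.2 hc)] with r hr hr'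
  refine sIntegral_eq_zero_of_tail hf _ hr fun M => ?_
  simpa only [neg_smul, ← neg_add, neg_apply] using hr' M

theorem exists_finite_measure_tail_ne_zero {F : Set (E → ℝ)} (hF : F.Countable)
    (hmeas : ∀ f ∈ F, Measurable f) (hunb : ∀ f ∈ F, ¬ Bornology.IsBounded (Set.range f)) :
    ∃ m : Measure E, IsFiniteMeasure m ∧ ∀ f ∈ F, ∀ l : ℕ, m {x | (l : ℝ) ≤ |f x|} ≠ 0 := by
  have : Countable F := hF.to_subtype
  have hex : ∀ p : F × ℕ, ∃ x, (p.2 : ℝ) ≤ |p.1.1 x| := by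
    rintro ⟨⟨f, hf⟩, l⟩
    by_contra! hlt
    exact hunb f hf (isBounded_iff_forall_norm_le.2 ⟨l, Set.forall_mem_range.2 fun x => (hlt x).le⟩)
  choose x hx using hex
  refine ⟨(Measure.sum fun p => Measure.dirac (x p)).toFinite, inferInstance, fun f hf l h0 => ?_⟩
  have hsum := absolutelyContinuous_toFinite (Measure.sum fun p => Measure.dirac (x p)) h0
  rw [Measure.sum_apply _ (measurableSet_tail (hmeas f hf) l), ENNReal.tsum_eq_zero] at hsum
  have hdirac := hsum (⟨f, hf⟩, l)
  rw [Measure.dirac_apply' _ (measurableSet_tail (hmeas f hf) l)] at hdirac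
  simp [hx (⟨f, hf⟩, l)] at hdirac

theorem exists_sIntegral_eq_zero_of_unbounded {F : Set (E → ℝ)} (hF : F.Countable)
    (hmeas : ∀ f ∈ F, Measurable f) (hunb : ∀ f ∈ F, ¬ Bornology.IsBounded (Set.range f))
    (μ : SignedMeasure E) :
    ∃ r : SignedMeasure E, ∀ f ∈ F,
      sIntegral r f = 0 ∧ ∀ j : ℕ, sIntegral (μ - (1 / ((j : ℝ) + 1)) • r) f = 0 := by
  obtain ⟨m, _, hm⟩ := exists_finite_measure_tail_ne_zero hF hmeas hunb
  have hgeneric : ∀ᶠ r : E →₁[m] ℝ in residual (E →₁[m] ℝ), ∀ f ∈ F,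
      sIntegral (0 + (1 : ℝ) • m.withDensityᵥ r) f = 0 ∧
      ∀ j : ℕ, sIntegral (μ + (-(1 / ((j : ℝ) + 1))) • m.withDensityᵥ r) f = 0 := by
    refine (eventually_countable_ball hF).2 fun f hf => Eventually.and
      (eventually_residual_sIntegral_eq_zero (hmeas f hf) m (hm f hf) 0 one_ne_zero)
      (eventually_countable_forall.2 fun j =>
        eventually_residual_sIntegral_eq_zero (hmeas f hf) m (hm f hf) μ
          (neg_ne_zero.2 (Nat.one_div_pos_of_nat).ne'))
  obtain ⟨r, hr⟩ := (dense_of_mem_residual hgeneric).nonempty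
  refine ⟨m.withDensityᵥ r, fun f hf => ?_⟩
  simpa only [zero_add, one_smul, neg_smul, ← sub_eq_add_neg] using hr f hf

end UnboundedFunctions

section WeightedMoments

variable {V : Type*} [AddCommGroup V] [Module ℝ V] {ι : Type*}

/-- The weighted series `∑ i, d i * |ℓ i v|` of absolute moments, valued in `[0, ∞]` so that
divergent series do not collapse to `0`. -/
noncomputable def weightedMoments (d : ι → ℝ) (ℓ : ι → V →ₗ[ℝ] ℝ) (v : V) : ENNReal :=
  ∑' i, ENNReal.ofReal (d i * |ℓ i v|)

variable {d : ι → ℝ} {ℓ : ι → V →ₗ[ℝ] ℝ}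

theorem weightedMoments_add_le (hd : ∀ i, 0 ≤ d i) (v w : V) :
    weightedMoments d ℓ (v + w) ≤ weightedMoments d ℓ v + weightedMoments d ℓ w := by
  rw [weightedMoments, weightedMoments, weightedMoments, ← ENNReal.tsum_add]
  refine ENNReal.tsum_le_tsum fun i => ?_
  rw [← ENNReal.ofReal_add (mul_nonneg (hd i) (abs_nonneg _)) (mul_nonneg (hd i) (abs_nonneg _)),
    ← mul_add, map_add]
  exact ENNReal.ofReal_le_ofReal (mul_le_mul_of_nonneg_left (abs_add_le _ _) (hd i))

theorem weightedMoments_smul (c : ℝ) (v : V) :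
    weightedMoments d ℓ (c • v) = ENNReal.ofReal |c| * weightedMoments d ℓ v := by
  rw [weightedMoments, weightedMoments, ← ENNReal.tsum_mul_left]
  refine tsum_congr fun i => ?_
  rw [← ENNReal.ofReal_mul (abs_nonneg _), map_smul, smul_eq_mul, abs_mul, mul_left_comm]

theorem weightedMoments_sub_smul_le (hd : ∀ i, 0 ≤ d i) {c : ℝ} (hc : 0 ≤ c) (v w : V) :
    weightedMoments d ℓ (v - c • w)
      ≤ weightedMoments d ℓ v + ENNReal.ofReal c * weightedMoments d ℓ w := by
  have hadd := weightedMoments_add_le (ℓ := ℓ) hd v ((-c) • w)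
  rwa [weightedMoments_smul, abs_neg, abs_of_nonneg hc, neg_smul, ← sub_eq_add_neg] at hadd

theorem weightedMoments_sub_eq_top (hd : ∀ i, 0 ≤ d i) {c : ℝ} (hc : 0 < c) {v w : V}
    (hv : weightedMoments d ℓ v ≠ ⊤) (hw : weightedMoments d ℓ w = ⊤) :
    weightedMoments d ℓ (v - c • w) = ⊤ := by
  by_contra hfin
  have hle := weightedMoments_sub_smul_le (ℓ := ℓ) hd zero_le_one v (v - c • w)
  rw [one_smul, sub_sub_cancel, weightedMoments_smul, hw,
    ENNReal.mul_top (by simpa using hc.ne'), top_le_iff, ENNReal.ofReal_one, one_mul] at hle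
  exact ENNReal.add_ne_top.2 ⟨hv, hfin⟩ hle

theorem seminorm_le_sub_smul_add (N : Seminorm ℝ V) {c : ℝ} (hc : 0 ≤ c) (v r : V) :
    N v ≤ N (v - c • r) + c * N r := by
  have hadd := map_add_le_add N (v - c • r) (c • r)
  rwa [sub_add_cancel, map_smul_eq_mul, Real.norm_of_nonneg hc] at hadd

/-- Let `j → ∞` in `N v ≤ N (v - r / (j + 1)) + N r / (j + 1)`; if the moments of `r` diverge,
the two hypotheses make both terms on the right vanish. -/
theorem ofReal_seminorm_le_weightedMoments_of_perturbation (N : Seminorm ℝ V)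
    (hd : ∀ i, 0 ≤ d i) {v r : V} (hr : N r ≤ (weightedMoments d ℓ r).toReal)
    (hv : ∀ j : ℕ, N (v - (1 / ((j : ℝ) + 1)) • r)
      ≤ (weightedMoments d ℓ (v - (1 / ((j : ℝ) + 1)) • r)).toReal) :
    ENNReal.ofReal (N v) ≤ weightedMoments d ℓ v := by
  have hpos : ∀ j : ℕ, (0 : ℝ) < 1 / ((j : ℝ) + 1) := fun j => Nat.one_div_pos_of_nat
  rcases eq_or_ne (weightedMoments d ℓ v) ⊤ with hvtop | hvtop
  · exact hvtop ▸ le_top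
  rw [ENNReal.ofReal_le_iff_le_toReal hvtop]
  rcases eq_or_ne (weightedMoments d ℓ r) ⊤ with hrtop | hrtop
  · have hv0 := hv 0
    rw [weightedMoments_sub_eq_top hd (hpos 0) hvtop hrtop, ENNReal.toReal_top] at hv0
    rw [hrtop, ENNReal.toReal_top] at hr
    have hsplit := seminorm_le_sub_smul_add N (hpos 0).le v r
    have := mul_nonpos_of_nonneg_of_nonpos (hpos 0).le hr
    exact le_trans (by linarith) ENNReal.toReal_nonneg
  · have hbound : ∀ j : ℕ, N v ≤ (weightedMoments d ℓ v).toReal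
        + 2 * (weightedMoments d ℓ r).toReal * (1 / ((j : ℝ) + 1)) := by
      intro j
      have hmul := ENNReal.mul_ne_top (ENNReal.ofReal_ne_top (r := 1 / ((j : ℝ) + 1))) hrtop
      have hsub := ENNReal.toReal_mono (ENNReal.add_ne_top.2 ⟨hvtop, hmul⟩)
        (weightedMoments_sub_smul_le (ℓ := ℓ) hd (hpos j).le v r)
      rw [ENNReal.toReal_add hvtop hmul, ENNReal.toReal_mul,
        ENNReal.toReal_ofReal (hpos j).le] at hsub
      have hsplit := seminorm_le_sub_smul_add N (hpos j).le v r
      have := mul_le_mul_of_nonneg_left hr (hpos j).le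
      linarith [hv j]
    have hlim := ((tendsto_one_div_add_atTop_nhds_zero_nat (𝕜 := ℝ)).const_mul
      (2 * (weightedMoments d ℓ r).toReal)).const_add (weightedMoments d ℓ v).toReal
    simpa using ge_of_tendsto' hlim hbound

theorem tsum_le_toReal_tsum_ofReal {g : ι → ℝ} (hg : ∀ i, 0 ≤ g i) :
    ∑' i, g i ≤ (∑' i, ENNReal.ofReal (g i)).toReal := by
  by_cases hs : Summable g
  · rw [← ENNReal.ofReal_tsum_of_nonneg hg hs, ENNReal.toReal_ofReal (tsum_nonneg hg)]
  · rw [tsum_eq_zero_of_not_summable hs]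
    exact ENNReal.toReal_nonneg

theorem seminorm_le_tsum {N : Seminorm ℝ V} {φ : ι → ℝ} {v : V}
    (hN : ENNReal.ofReal (N v) ≤ weightedMoments d ℓ v) (hd : ∀ i, 0 ≤ d i)
    (hsum : Summable fun i => d i * φ i) (hℓ : ∀ i, |ℓ i v| ≤ φ i) : N v ≤ ∑' i, d i * φ i := by
  have hφ : ∀ i, 0 ≤ d i * φ i := fun i => mul_nonneg (hd i) ((abs_nonneg _).trans (hℓ i))
  refine (ENNReal.ofReal_le_ofReal_iff (tsum_nonneg hφ)).1 (hN.trans ?_)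
  rw [ENNReal.ofReal_tsum_of_nonneg hφ hsum]
  exact ENNReal.tsum_le_tsum fun i =>
    ENNReal.ofReal_le_ofReal (mul_le_mul_of_nonneg_left (hℓ i) (hd i))

section SignedMeasure

variable {E : Type*} [MeasurableSpace E] {F : Set (E → ℝ)} {d : (E → ℝ) → ℝ}

/-- The bounded functions of a family: those whose integral against every finite signed measure
is a genuine one. -/
def boundedPart (F : Set (E → ℝ)) : Set (E → ℝ) := {f ∈ F | Bornology.IsBounded (Set.range f)}

/-- Integration against the bounded functions of a family of measurable functions. -/
noncomputable def boundedIntegral (hmeas : ∀ f ∈ F, Measurable f) (f : boundedPart F) :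
    SignedMeasure E →ₗ[ℝ] ℝ :=
  sIntegralLinear f.1 (hmeas f f.2.1) f.2.2

theorem tsum_abs_sIntegral_le_toReal_weightedMoments (hmeas : ∀ f ∈ F, Measurable f)
    (hd : ∀ f ∈ F, 0 ≤ d f) {ν : SignedMeasure E}
    (hν : ∀ f ∈ F, ¬ Bornology.IsBounded (Set.range f) → sIntegral ν f = 0) :
    ∑' f : F, d f * |sIntegral ν f|
      ≤ (weightedMoments (fun f : boundedPart F => d f) (boundedIntegral hmeas) ν).toReal := by
  refine (tsum_le_toReal_tsum_ofReal fun f : F =>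
    mul_nonneg (hd f f.2) (abs_nonneg _)).trans_eq (congrArg ENNReal.toReal ?_)
  have hsub : boundedPart F ⊆ F := Set.sep_subset _ _
  refine (tsum_eq_tsum_of_ne_zero_bij (fun f => Set.inclusion hsub f.1) ?_ ?_ fun f => ?_)
  · exact fun f g hfg => Subtype.ext (Subtype.ext (congrArg (fun f : F => f.1) hfg))
  · rintro ⟨f, hf⟩ hne
    have hb : Bornology.IsBounded (Set.range f) := by
      by_contra hb
      simp [hν f hf hb] at hne
    exact ⟨⟨⟨f, hf, hb⟩, hne⟩, rfl⟩
  · rfl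

theorem ofReal_seminorm_le_weightedMoments_boundedPart (N : Seminorm ℝ (SignedMeasure E))
    (hF : F.Countable) (hmeas : ∀ f ∈ F, Measurable f) (hd : ∀ f ∈ F, 0 ≤ d f)
    (hN : ∀ ν : SignedMeasure E, N ν ≤ ∑' f : F, d f * |sIntegral ν f|) (μ : SignedMeasure E) :
    ENNReal.ofReal (N μ)
      ≤ weightedMoments (fun f : boundedPart F => d f) (boundedIntegral hmeas) μ := by
  obtain ⟨r, hr⟩ := exists_sIntegral_eq_zero_of_unbounded
    (F := {f ∈ F | ¬ Bornology.IsBounded (Set.range f)}) (hF.mono (Set.sep_subset _ _))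
    (fun f hf => hmeas f hf.1) (fun f hf => hf.2) μ
  have hdeg : ∀ ν, (∀ f ∈ F, ¬ Bornology.IsBounded (Set.range f) → sIntegral ν f = 0) →
      N ν ≤ (weightedMoments (fun f : boundedPart F => d f) (boundedIntegral hmeas) ν).toReal :=
    fun ν hν => (hN ν).trans (tsum_abs_sIntegral_le_toReal_weightedMoments hmeas hd hν)
  exact ofReal_seminorm_le_weightedMoments_of_perturbation N
    (d := fun f : boundedPart F => d f) (fun f => hd f f.2.1)
    (hdeg r fun f hf hb => (hr f ⟨hf, hb⟩).1)
    fun j => hdeg _ fun f hf hb => (hr f ⟨hf, hb⟩).2 j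

end SignedMeasure

end WeightedMoments

section Peeling

variable {Ω : Type*} [MeasurableSpace Ω] {ℙ : Measure Ω} {ι : Type*}

/-- For all `m`, the maximum of `R i` over those `i ∈ I` at distance `δ i ≤ m` exceeds `t` with
probability at most `K * m ^ β / t`. -/
def HasMaximalTail (ℙ : Measure Ω) (I : Set ι) (δ : ι → ℝ) (R : ι → Ω → ℝ) (K β : ℝ) : Prop :=
  ∀ ⦃m t : ℝ⦄, 0 < m → 0 < t →
    ℙ {ω | ∃ i ∈ I, δ i ≤ m ∧ t ≤ R i ω} ≤ ENNReal.ofReal (K * m ^ β / t)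

variable {I : Set ι} {δ : ι → ℝ} {R : ι → Ω → ℝ} {K β : ℝ}

theorem exists_dyadic_scale {m x : ℝ} {L : ℕ} (hm : 0 < m) (hmx : m ≤ x) (hx : x < m * 2 ^ L) :
    ∃ l < L, m * 2 ^ l ≤ x ∧ x ≤ m * 2 ^ (l + 1) := by
  obtain ⟨l, hl, hl'⟩ := exists_nat_pow_near ((one_le_div hm).2 hmx) one_lt_two
  rw [le_div_iff₀' hm] at hl
  rw [div_lt_iff₀' hm] at hl'
  refine ⟨l, ?_, hl, hl'.le⟩
  exact (pow_lt_pow_iff_right₀ one_lt_two).1 (lt_of_mul_lt_mul_left (hl.trans_lt hx) hm.le)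

theorem maximal_tail_dyadic_eq {c m : ℝ} (hm : 0 < m) (γ : ℝ) (l : ℕ) :
    K * (m * 2 ^ (l + 1)) ^ β / (c * (m * 2 ^ l) ^ γ)
      = K / c * 2 ^ β * m ^ (β - γ) * ((2 : ℝ) ^ (β - γ)) ^ l := by
  have hpow : (m * 2 ^ l) ^ (β - γ) = m ^ (β - γ) * ((2 : ℝ) ^ (β - γ)) ^ l := by
    rw [Real.mul_rpow hm.le (by positivity), ← Real.rpow_mul_natCast zero_le_two,
      mul_comm (β - γ), Real.rpow_natCast_mul zero_le_two]
  rw [mul_assoc _ (m ^ _), ← hpow, Real.rpow_sub (by positivity), pow_succ, ← mul_assoc m,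
    Real.mul_rpow (by positivity) zero_le_two]
  ring

theorem HasMaximalTail.measure_exists_mul_rpow_le (h : HasMaximalTail ℙ I δ R K β) (hK : 0 ≤ K)
    {c m γ : ℝ} (hc : 0 < c) (hm : 0 < m) (hγ : 0 ≤ γ) (L : ℕ) :
    ℙ {ω | ∃ i ∈ I, m ≤ δ i ∧ δ i < m * 2 ^ L ∧ c * δ i ^ γ ≤ R i ω} ≤
      ENNReal.ofReal (K / c * 2 ^ β * m ^ (β - γ) *
        ∑ l ∈ Finset.range L, ((2 : ℝ) ^ (β - γ)) ^ l) := by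
  have hsub : {ω | ∃ i ∈ I, m ≤ δ i ∧ δ i < m * 2 ^ L ∧ c * δ i ^ γ ≤ R i ω} ⊆
      ⋃ l ∈ Finset.range L,
        {ω | ∃ i ∈ I, δ i ≤ m * 2 ^ (l + 1) ∧ c * (m * 2 ^ l) ^ γ ≤ R i ω} := by
    rintro ω ⟨i, hi, hmi, hiL, hR⟩
    obtain ⟨l, hl, hlo, hhi⟩ := exists_dyadic_scale hm hmi hiL
    refine Set.mem_biUnion (Finset.mem_range.2 hl) ⟨i, hi, hhi, le_trans ?_ hR⟩
    exact mul_le_mul_of_nonneg_left (Real.rpow_le_rpow (by positivity) hlo hγ) hc.le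
  calc ℙ {ω | ∃ i ∈ I, m ≤ δ i ∧ δ i < m * 2 ^ L ∧ c * δ i ^ γ ≤ R i ω}
      ≤ ∑ l ∈ Finset.range L,
          ENNReal.ofReal (K * (m * 2 ^ (l + 1)) ^ β / (c * (m * 2 ^ l) ^ γ)) :=
        (measure_mono hsub).trans <| (measure_biUnion_finset_le _ _).trans <|
          Finset.sum_le_sum fun l _ => h (by positivity) (by positivity)
    _ = _ := by
        rw [← ENNReal.ofReal_sum_of_nonneg fun l _ => by positivity, Finset.mul_sum]
        simp only [maximal_tail_dyadic_eq hm]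

theorem geom_sum_le_one_div {q : ℝ} (hq0 : 0 ≤ q) (hq1 : q < 1) (L : ℕ) :
    ∑ l ∈ Finset.range L, q ^ l ≤ 1 / (1 - q) := by
  rw [le_div_iff₀ (sub_pos.2 hq1), geom_sum_mul_neg]
  exact sub_le_self _ (pow_nonneg hq0 L)

theorem HasMaximalTail.measure_exists_mul_le (h : HasMaximalTail ℙ I δ R K β) (hK : 0 ≤ K)
    (hβ : β < 1) (hI : BddAbove (δ '' I)) {c m : ℝ} (hc : 0 < c) (hm : 0 < m) :
    ℙ {ω | ∃ i ∈ I, m ≤ δ i ∧ c * δ i ≤ R i ω} ≤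
      ENNReal.ofReal (K / c * 2 ^ β * m ^ (β - 1) * (1 / (1 - 2 ^ (β - 1)))) := by
  obtain ⟨B, hB⟩ := hI
  obtain ⟨L, hL⟩ := pow_unbounded_of_one_lt (B / m) one_lt_two
  have hδL : ∀ i ∈ I, δ i < m * 2 ^ L := fun i hi =>
    (hB ⟨i, hi, rfl⟩).trans_lt ((div_lt_iff₀' hm).1 hL)
  calc ℙ {ω | ∃ i ∈ I, m ≤ δ i ∧ c * δ i ≤ R i ω}
      ≤ ℙ {ω | ∃ i ∈ I, m ≤ δ i ∧ δ i < m * 2 ^ L ∧ c * δ i ^ (1 : ℝ) ≤ R i ω} :=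
        measure_mono fun ω ⟨i, hi, hmi, hR⟩ =>
          ⟨i, hi, hmi, hδL i hi, by rwa [Real.rpow_one]⟩
    _ ≤ _ := h.measure_exists_mul_rpow_le hK hc hm zero_le_one L
    _ ≤ _ := by
        gcongr
        exact geom_sum_le_one_div (by positivity)
          (Real.rpow_lt_one_of_one_lt_of_neg one_lt_two (sub_neg.2 hβ)) L

end Peeling

section Rate

/-- The rate `n ^ (-r / 2) (1 + ln n · 1{γ - 1 + r / 2 = 0}) + n ^ (γ - 1)` which the signal
`b n` has to dominate. -/
noncomputable def deviationRate (γ r : ℝ) (n : ℕ) : ℝ :=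
  (n : ℝ) ^ (-r / 2) * (1 + Real.log n * (if γ - 1 + r / 2 = 0 then (1 : ℝ) else 0)) +
    (n : ℝ) ^ (γ - 1)

theorem rpow_le_deviationRate (γ r : ℝ) (n : ℕ) : (n : ℝ) ^ (-r / 2) ≤ deviationRate γ r n := by
  have hlog : 0 ≤ Real.log n * (if γ - 1 + r / 2 = 0 then (1 : ℝ) else 0) :=
    mul_nonneg (Real.log_natCast_nonneg n) (by split_ifs <;> norm_num)
  refine (le_mul_of_one_le_right (by positivity) (le_add_of_nonneg_right hlog)).trans ?_
  exact le_add_of_nonneg_right (by positivity)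

theorem rpow_sub_one_le_deviationRate (γ r : ℝ) (n : ℕ) :
    (n : ℝ) ^ (γ - 1) ≤ deviationRate γ r n := by
  have : 0 ≤ Real.log n * (if γ - 1 + r / 2 = 0 then (1 : ℝ) else 0) :=
    mul_nonneg (Real.log_natCast_nonneg n) (by split_ifs <;> norm_num)
  exact le_add_of_nonneg_left (by positivity)

theorem pow_natLog_succ_le {δ : ℝ} (hδ : 0 ≤ δ) {n : ℕ} (hn : n ≠ 0) :
    ((2 : ℝ) ^ δ) ^ (Nat.log 2 n + 1) ≤ 2 ^ δ * (n : ℝ) ^ δ := by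
  have hlog : (2 : ℝ) ^ Nat.log 2 n ≤ n := by exact_mod_cast Nat.pow_log_le_self 2 hn
  rw [pow_succ', ← Real.rpow_mul_natCast zero_le_two, mul_comm δ,
    Real.rpow_natCast_mul zero_le_two]
  gcongr

theorem natLog_succ_le {n : ℕ} (hn : n ≠ 0) :
    ((Nat.log 2 n + 1 : ℕ) : ℝ) ≤ (1 + 1 / Real.log 2) * (1 + Real.log n) := by
  have hlog2 : 0 < Real.log 2 := Real.log_pos one_lt_two
  have hlogn : 0 ≤ Real.log n := Real.log_natCast_nonneg n
  have hle : (Nat.log 2 n : ℝ) ≤ Real.log n / Real.log 2 := by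
    rw [le_div_iff₀ hlog2, ← Real.log_pow]
    exact Real.log_le_log (by positivity) (by exact_mod_cast Nat.pow_log_le_self 2 hn)
  have hinv : 0 < 1 / Real.log 2 := by positivity
  rw [div_eq_mul_one_div] at hle
  push_cast
  nlinarith

theorem exists_rpow_mul_geom_sum_le_deviationRate (γ r : ℝ) :
    ∃ C, 0 ≤ C ∧ ∀ n : ℕ, n ≠ 0 →
      (n : ℝ) ^ (γ - 1) * ∑ l ∈ Finset.range (Nat.log 2 n + 1), ((2 : ℝ) ^ (1 - r / 2 - γ)) ^ l
        ≤ C * deviationRate γ r n := by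
  rcases lt_trichotomy (1 - r / 2 - γ) 0 with hneg | hzero | hpos
  · have hq : (2 : ℝ) ^ (1 - r / 2 - γ) < 1 := Real.rpow_lt_one_of_one_lt_of_neg one_lt_two hneg
    have hC : 0 ≤ 1 / (1 - (2 : ℝ) ^ (1 - r / 2 - γ)) := one_div_nonneg.2 (sub_nonneg.2 hq.le)
    refine ⟨_, hC, fun n _ => ?_⟩
    rw [mul_comm]
    exact mul_le_mul (geom_sum_le_one_div (by positivity) hq _)
      (rpow_sub_one_le_deviationRate γ r n) (by positivity) hC
  · have hγ : γ - 1 = -r / 2 := by linarith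
    refine ⟨1 + 1 / Real.log 2, by have := Real.log_pos one_lt_two; positivity, fun n hn => ?_⟩
    calc (n : ℝ) ^ (γ - 1) * ∑ l ∈ Finset.range (Nat.log 2 n + 1), ((2 : ℝ) ^ (1 - r / 2 - γ)) ^ l
        = (n : ℝ) ^ (-r / 2) * ((Nat.log 2 n + 1 : ℕ) : ℝ) := by simp [hzero, hγ]
      _ ≤ (n : ℝ) ^ (-r / 2) * ((1 + 1 / Real.log 2) * (1 + Real.log n)) :=
          mul_le_mul_of_nonneg_left (natLog_succ_le hn) (by positivity)
      _ = (1 + 1 / Real.log 2) * ((n : ℝ) ^ (-r / 2) * (1 + Real.log n)) := by ring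
      _ ≤ (1 + 1 / Real.log 2) * deviationRate γ r n := by
          have := Real.log_pos one_lt_two
          rw [deviationRate, if_pos (by linarith), mul_one]
          gcongr
          exact le_add_of_nonneg_right (by positivity)
  · set q : ℝ := 2 ^ (1 - r / 2 - γ)
    have hq1 : 0 < q - 1 := sub_pos.2 (Real.one_lt_rpow one_lt_two hpos)
    refine ⟨q / (q - 1), by positivity, fun n hn => ?_⟩
    have hsum : ∑ l ∈ Finset.range (Nat.log 2 n + 1), q ^ l
        ≤ q / (q - 1) * (n : ℝ) ^ (1 - r / 2 - γ) := by
      rw [div_mul_eq_mul_div, le_div_iff₀ hq1, geom_sum_mul]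
      exact (sub_le_self _ zero_le_one).trans (pow_natLog_succ_le hpos.le hn)
    calc (n : ℝ) ^ (γ - 1) * ∑ l ∈ Finset.range (Nat.log 2 n + 1), q ^ l
        ≤ (n : ℝ) ^ (γ - 1) * (q / (q - 1) * (n : ℝ) ^ (1 - r / 2 - γ)) := by gcongr
      _ = q / (q - 1) * (n : ℝ) ^ (-r / 2) := by
          rw [mul_left_comm, ← Real.rpow_add (by positivity)]
          ring_nf
      _ ≤ q / (q - 1) * deviationRate γ r n := by
          gcongr
          exact rpow_le_deviationRate γ r n

end Rate

section SecondMoments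

variable {Ω : Type*} [MeasurableSpace Ω] {ℙ : Measure Ω} {ξ : ℕ → Ω → ℝ} {n : ℕ} {V r : ℝ}

/-- The first `n` variables `ξ i` are square integrable with second moments at most `V`, and their
mixed second moments decay like `|i - j| ^ (-r)`. The variables are meant to be centred, so that
these moments are covariances. -/
structure HasCovDecay (ℙ : Measure Ω) (ξ : ℕ → Ω → ℝ) (n : ℕ) (V r : ℝ) : Prop where
  memLp : ∀ ⦃i⦄, i < n → MemLp (ξ i) 2 ℙ
  integral_sq_le : ∀ ⦃i⦄, i < n → ∫ ω, ξ i ω ^ 2 ∂ℙ ≤ V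
  abs_integral_mul_le : ∀ ⦃i j⦄, i < n → j < n → i ≠ j →
    |∫ ω, ξ i ω * ξ j ω ∂ℙ| ≤ V * |(i : ℝ) - j| ^ (-r)

theorem HasCovDecay.comp (h : HasCovDecay ℙ ξ n V r) {m : ℕ} {g : ℕ → ℕ}
    (hg : ∀ i < m, g i < n) (hdist : ∀ i < m, ∀ j < m, |(g i : ℝ) - g j| = |(i : ℝ) - j|) :
    HasCovDecay ℙ (fun i => ξ (g i)) m V r where
  memLp i hi := h.memLp (hg i hi)
  integral_sq_le i hi := h.integral_sq_le (hg i hi)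
  abs_integral_mul_le i j hi hj hij := by
    have hne : g i ≠ g j := fun heq => hij <| by
      have hzero := hdist i hi j hj
      rw [heq, sub_self, abs_zero, eq_comm, abs_eq_zero, sub_eq_zero] at hzero
      exact_mod_cast hzero
    exact hdist i hi j hj ▸ h.abs_integral_mul_le (hg i hi) (hg j hj) hne

theorem mul_add_one_rpow_neg_le_sub (hr0 : 0 ≤ r) (hr1 : r ≤ 1) (t : ℕ) :
    (1 - r) * ((t : ℝ) + 1) ^ (-r) ≤ ((t : ℝ) + 1) ^ (1 - r) - (t : ℝ) ^ (1 - r) := by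
  have ht : (0 : ℝ) < (t : ℝ) + 1 := by positivity
  have hbase : (0 : ℝ) ≤ 1 + -(1 / ((t : ℝ) + 1)) := by
    rw [← sub_eq_add_neg, sub_nonneg, div_le_one ht]
    simp
  have hbernoulli : (1 + -(1 / ((t : ℝ) + 1))) ^ (1 - r)
      ≤ 1 + (1 - r) * -(1 / ((t : ℝ) + 1)) :=
    rpow_one_add_le_one_add_mul_self (by linarith) (by linarith) (by linarith)
  have hfactor : (t : ℝ) ^ (1 - r)
      = ((t : ℝ) + 1) ^ (1 - r) * (1 + -(1 / ((t : ℝ) + 1))) ^ (1 - r) := by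
    rw [← Real.mul_rpow ht.le hbase]
    congr 1
    field_simp
    ring
  have hsplit : ((t : ℝ) + 1) ^ (1 - r) = ((t : ℝ) + 1) ^ (-r) * ((t : ℝ) + 1) := by
    rw [← Real.rpow_add_one ht.ne', neg_add_eq_sub]
  calc (1 - r) * ((t : ℝ) + 1) ^ (-r)
      = ((t : ℝ) + 1) ^ (1 - r)
        - ((t : ℝ) + 1) ^ (1 - r) * (1 + (1 - r) * -(1 / ((t : ℝ) + 1))) := by
        rw [hsplit]
        field_simp
        ring
    _ ≤ _ := by
        rw [hfactor]
        gcongr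

theorem sum_add_one_rpow_neg_le (hr0 : 0 ≤ r) (hr1 : r < 1) (t : ℕ) :
    ∑ i ∈ Finset.range t, ((i : ℝ) + 1) ^ (-r) ≤ (t : ℝ) ^ (1 - r) / (1 - r) := by
  have h1r : 0 < 1 - r := sub_pos.2 hr1
  rw [le_div_iff₀ h1r]
  induction t with
  | zero => simp [Real.zero_rpow h1r.ne']
  | succ t ih =>
    rw [Finset.sum_range_succ, add_mul]
    push_cast
    linarith [mul_add_one_rpow_neg_le_sub hr0 hr1.le t]

theorem rpow_two_sub_step (hr1 : r < 1) (t : ℕ) :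
    1 + 2 * ((t : ℝ) ^ (1 - r) / (1 - r)) + (1 + 2 / (1 - r)) * (t : ℝ) ^ (2 - r)
      ≤ (1 + 2 / (1 - r)) * ((t : ℝ) + 1) ^ (2 - r) := by
  have h1r : 0 < 1 - r := sub_pos.2 hr1
  have hmul : ∀ x : ℝ, 0 ≤ x → x ^ (2 - r) = x ^ (1 - r) * x := fun x hx => by
    rw [← Real.rpow_add_one' hx (by linarith)]
    ring_nf
  have hmono : (t : ℝ) ^ (1 - r) ≤ ((t : ℝ) + 1) ^ (1 - r) :=
    Real.rpow_le_rpow (Nat.cast_nonneg t) (by linarith) h1r.le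
  have hone : 1 ≤ ((t : ℝ) + 1) ^ (1 - r) :=
    Real.one_le_rpow (by linarith [Nat.cast_nonneg (α := ℝ) t]) h1r.le
  rw [hmul _ (Nat.cast_nonneg t), hmul _ (by positivity)]
  calc 1 + 2 * ((t : ℝ) ^ (1 - r) / (1 - r)) + (1 + 2 / (1 - r)) * ((t : ℝ) ^ (1 - r) * t)
      ≤ ((t : ℝ) + 1) ^ (1 - r) + 2 * (((t : ℝ) + 1) ^ (1 - r) / (1 - r))
        + (1 + 2 / (1 - r)) * (((t : ℝ) + 1) ^ (1 - r) * t) := by gcongr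
    _ = _ := by ring

theorem integral_sq_add {Y Z : Ω → ℝ} (hY : MemLp Y 2 ℙ) (hZ : MemLp Z 2 ℙ) :
    ∫ ω, (Y ω + Z ω) ^ 2 ∂ℙ
      = ∫ ω, Y ω ^ 2 ∂ℙ + 2 * ∫ ω, Y ω * Z ω ∂ℙ + ∫ ω, Z ω ^ 2 ∂ℙ := by
  have hYZ : Integrable (fun ω => 2 * (Y ω * Z ω)) ℙ := (hY.integrable_mul hZ).const_mul 2
  have hYYZ : Integrable (fun ω => Y ω ^ 2 + 2 * (Y ω * Z ω)) ℙ := hY.integrable_sq.add hYZ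
  simp only [add_sq, mul_assoc]
  rw [integral_add hYYZ hZ.integrable_sq, integral_add hY.integrable_sq hYZ, integral_const_mul]

theorem HasCovDecay.integral_mul_sum_le (h : HasCovDecay ℙ ξ n V r) (hr0 : 0 ≤ r) (hr1 : r < 1)
    (hV : 0 ≤ V) {s t : ℕ} (hst : s + (t + 1) ≤ n) :
    ∫ ω, ξ s ω * ∑ i ∈ Finset.range t, ξ (s + 1 + i) ω ∂ℙ ≤ V * ((t : ℝ) ^ (1 - r) / (1 - r)) := by
  have hint : ∀ i ∈ Finset.range t, Integrable (fun ω => ξ s ω * ξ (s + 1 + i) ω) ℙ :=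
    fun i hi => (h.memLp (by omega)).integrable_mul
      (h.memLp (by have := Finset.mem_range.1 hi; omega))
  have hterm : ∀ i ∈ Finset.range t,
      ∫ ω, ξ s ω * ξ (s + 1 + i) ω ∂ℙ ≤ V * ((i : ℝ) + 1) ^ (-r) := by
    intro i hi
    have hi' := Finset.mem_range.1 hi
    refine (le_abs_self _).trans
      ((h.abs_integral_mul_le (by omega) (by omega) (by omega)).trans_eq ?_)
    rw [abs_sub_comm, abs_of_nonneg] <;> push_cast
    · ring_nf
    · linarith [Nat.cast_nonneg (α := ℝ) i]
  simp only [Finset.mul_sum]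
  rw [integral_finsetSum _ hint]
  refine (Finset.sum_le_sum hterm).trans ?_
  rw [← Finset.mul_sum]
  exact mul_le_mul_of_nonneg_left (sum_add_one_rpow_neg_le hr0 hr1 t) hV

theorem HasCovDecay.integral_sq_sum_le (h : HasCovDecay ℙ ξ n V r) (hr0 : 0 ≤ r) (hr1 : r < 1)
    (hV : 0 ≤ V) (s t : ℕ) (hst : s + t ≤ n) :
    ∫ ω, (∑ i ∈ Finset.range t, ξ (s + i) ω) ^ 2 ∂ℙ
      ≤ V * (1 + 2 / (1 - r)) * (t : ℝ) ^ (2 - r) := by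
  induction t generalizing s with
  | zero => simp [Real.zero_rpow (show 2 - r ≠ 0 by linarith)]
  | succ t ih =>
    have hpeel : ∀ ω, ∑ i ∈ Finset.range (t + 1), ξ (s + i) ω
        = ξ s ω + ∑ i ∈ Finset.range t, ξ (s + 1 + i) ω := by
      intro ω
      rw [Finset.sum_range_succ', add_zero, add_comm]
      simp only [add_assoc, add_comm 1]
    simp only [hpeel]
    rw [integral_sq_add (h.memLp (by omega)) (memLp_finsetSum _ fun i hi =>
      h.memLp (by have := Finset.mem_range.1 hi; omega))]
    calc ∫ ω, ξ s ω ^ 2 ∂ℙ + 2 * ∫ ω, ξ s ω * ∑ i ∈ Finset.range t, ξ (s + 1 + i) ω ∂ℙ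
          + ∫ ω, (∑ i ∈ Finset.range t, ξ (s + 1 + i) ω) ^ 2 ∂ℙ
        ≤ V + 2 * (V * ((t : ℝ) ^ (1 - r) / (1 - r)))
          + V * (1 + 2 / (1 - r)) * (t : ℝ) ^ (2 - r) := by
          gcongr
          · exact h.integral_sq_le (by omega)
          · exact h.integral_mul_sum_le hr0 hr1 hV hst
          · exact ih (s + 1) (by omega)
      _ = V * (1 + 2 * ((t : ℝ) ^ (1 - r) / (1 - r))
          + (1 + 2 / (1 - r)) * (t : ℝ) ^ (2 - r)) := by ring
      _ ≤ V * ((1 + 2 / (1 - r)) * ((t : ℝ) + 1) ^ (2 - r)) :=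
          mul_le_mul_of_nonneg_left (rpow_two_sub_step hr1 t) hV
      _ = _ := by
          push_cast
          ring

end SecondMoments

section MaximalInequality

variable {Ω : Type*} [MeasurableSpace Ω] {ℙ : Measure Ω} {Z : ℕ → Ω → ℝ} {n : ℕ} {σ β : ℝ}

theorem sum_range_two_mul {M : Type*} [AddCommMonoid M] (z : ℕ → M) (s t : ℕ) :
    ∑ i ∈ Finset.range (2 * t), z (2 * s + i)
      = ∑ i ∈ Finset.range t, (z (2 * (s + i)) + z (2 * (s + i) + 1)) := by
  induction t with
  | zero => simp
  | succ t ih =>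
    rw [Finset.sum_range_succ _ t, ← ih, Nat.mul_succ, Finset.sum_range_succ,
      Finset.sum_range_succ, add_assoc, mul_add, add_assoc (2 * s)]

/-- A partial sum of odd length is a partial sum of consecutive pairs plus one term. -/
theorem enorm_sum_range_le_pairs (z : ℕ → ℝ) {j n : ℕ} (hj : j ≤ n) :
    ‖∑ i ∈ Finset.range j, z i‖ₑ ≤
      (⨆ t ∈ Set.Iic (n / 2), ‖∑ i ∈ Finset.range t, (z (2 * i) + z (2 * i + 1))‖ₑ)
        + ENNReal.ofReal √(∑ i ∈ Finset.range n, z i ^ 2) := by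
  have hpairs : ∀ t, ∑ i ∈ Finset.range (2 * t), z i
      = ∑ i ∈ Finset.range t, (z (2 * i) + z (2 * i + 1)) := fun t => by
    simpa using sum_range_two_mul z 0 t
  have hsup : ∀ t ≤ n / 2, ‖∑ i ∈ Finset.range t, (z (2 * i) + z (2 * i + 1))‖ₑ ≤
      ⨆ t ∈ Set.Iic (n / 2), ‖∑ i ∈ Finset.range t, (z (2 * i) + z (2 * i + 1))‖ₑ :=
    fun t ht => le_iSup₂_of_le t ht le_rfl
  rcases Nat.even_or_odd' j with ⟨t, rfl | rfl⟩
  · rw [hpairs]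
    exact (hsup t (by omega)).trans le_self_add
  · rw [Finset.sum_range_succ, hpairs]
    refine (enorm_add_le _ _).trans (add_le_add (hsup t (by omega)) ?_)
    rw [Real.enorm_eq_ofReal_abs]
    refine ENNReal.ofReal_le_ofReal (Real.abs_le_sqrt ?_)
    exact Finset.single_le_sum (f := fun i => z i ^ 2) (fun i _ => sq_nonneg _)
      (Finset.mem_range.2 (by omega))

theorem integral_sq_sum_pairs_le
    (hmom : ∀ s t : ℕ, s + t ≤ n →
      ∫ ω, (∑ i ∈ Finset.range t, Z (s + i) ω) ^ 2 ∂ℙ ≤ σ ^ 2 * (t : ℝ) ^ (2 * β))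
    (s t : ℕ) (hst : s + t ≤ n / 2) :
    ∫ ω, (∑ i ∈ Finset.range t, (Z (2 * (s + i)) ω + Z (2 * (s + i) + 1) ω)) ^ 2 ∂ℙ
      ≤ (σ * 2 ^ β) ^ 2 * (t : ℝ) ^ (2 * β) := by
  have hdouble := hmom (2 * s) (2 * t) (by omega)
  simp only [fun ω => sum_range_two_mul (fun i => Z i ω) s t] at hdouble
  refine hdouble.trans_eq ?_
  push_cast
  rw [Real.mul_rpow zero_le_two (Nat.cast_nonneg t), mul_pow, ← Real.rpow_mul_natCast zero_le_two,
    Nat.cast_ofNat, mul_comm β 2]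
  ring

variable [IsProbabilityMeasure ℙ]

theorem lintegral_ofReal_sqrt_le {Y : Ω → ℝ} (hY : Integrable Y ℙ) (hY0 : ∀ ω, 0 ≤ Y ω) :
    ∫⁻ ω, ENNReal.ofReal √(Y ω) ∂ℙ ≤ ENNReal.ofReal √(∫ ω, Y ω ∂ℙ) := by
  have hsqrt : Integrable (fun ω => √(Y ω)) ℙ := by
    refine ((integrable_const (1 : ℝ)).add hY).mono'
      (Real.continuous_sqrt.comp_aestronglyMeasurable hY.aestronglyMeasurable)
      (ae_of_all _ fun ω => ?_)
    rw [Real.norm_of_nonneg (Real.sqrt_nonneg _), Pi.add_apply]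
    exact Real.sqrt_le_iff.2 ⟨by linarith [hY0 ω], by nlinarith [hY0 ω]⟩
  rw [← ofReal_integral_eq_lintegral_ofReal hsqrt (ae_of_all _ fun ω => Real.sqrt_nonneg _)]
  exact ENNReal.ofReal_le_ofReal <| Real.strictConcaveOn_sqrt.concaveOn.le_map_integral
    Real.continuous_sqrt.continuousOn isClosed_Ici (ae_of_all _ hY0) hY hsqrt

theorem lintegral_sqrt_sum_sq_le (hσ : 0 ≤ σ) (hZ : ∀ i < n, MemLp (Z i) 2 ℙ)
    (hsq : ∀ i < n, ∫ ω, Z i ω ^ 2 ∂ℙ ≤ σ ^ 2) {L : ℕ} (hn : n ≤ 2 ^ L) :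
    ∫⁻ ω, ENNReal.ofReal √(∑ i ∈ Finset.range n, Z i ω ^ 2) ∂ℙ
      ≤ ENNReal.ofReal (σ * √2 ^ L) := by
  have hint : ∀ i ∈ Finset.range n, Integrable (fun ω => Z i ω ^ 2) ℙ := fun i hi =>
    (hZ i (Finset.mem_range.1 hi)).integrable_sq
  refine (lintegral_ofReal_sqrt_le (integrable_finsetSum _ hint)
    fun ω => Finset.sum_nonneg fun i _ => sq_nonneg _).trans (ENNReal.ofReal_le_ofReal ?_)
  refine Real.sqrt_le_iff.2 ⟨by positivity, ?_⟩
  calc ∫ ω, ∑ i ∈ Finset.range n, Z i ω ^ 2 ∂ℙ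
      = ∑ i ∈ Finset.range n, ∫ ω, Z i ω ^ 2 ∂ℙ := integral_finsetSum _ hint
    _ ≤ ∑ _i ∈ Finset.range n, σ ^ 2 :=
        Finset.sum_le_sum fun i hi => hsq i (Finset.mem_range.1 hi)
    _ = σ ^ 2 * n := by rw [Finset.sum_const, Finset.card_range, nsmul_eq_mul, mul_comm]
    _ ≤ σ ^ 2 * 2 ^ L := by gcongr; exact_mod_cast hn
    _ = (σ * √2 ^ L) ^ 2 := by
        rw [mul_pow, ← pow_mul, mul_comm L, pow_mul, Real.sq_sqrt zero_le_two]

/-- Summing over pairs halves the number of variables and multiplies `σ` by `2 ^ β`, while the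
variables left over at level `i` contribute `σ √2 ^ i`. -/
theorem lintegral_biSup_enorm_sum_le_of_le_two_pow (L : ℕ) :
    ∀ {n : ℕ} {σ : ℝ} {Z : ℕ → Ω → ℝ}, n ≤ 2 ^ L → 0 ≤ σ → (∀ i < n, MemLp (Z i) 2 ℙ) →
      (∀ s t : ℕ, s + t ≤ n →
        ∫ ω, (∑ i ∈ Finset.range t, Z (s + i) ω) ^ 2 ∂ℙ ≤ σ ^ 2 * (t : ℝ) ^ (2 * β)) →
      ∫⁻ ω, ⨆ j ∈ Set.Iic n, ‖∑ i ∈ Finset.range j, Z i ω‖ₑ ∂ℙ ≤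
        ENNReal.ofReal (σ * ∑ i ∈ Finset.range (L + 1), √2 ^ i * ((2 : ℝ) ^ β) ^ (L - i)) := by
  induction L with
  | zero =>
    intro n σ Z hn hσ hZ hmom
    have hsq : ∀ i < n, ∫ ω, Z i ω ^ 2 ∂ℙ ≤ σ ^ 2 := fun i hi => by simpa using hmom i 1 hi
    refine (lintegral_mono fun ω => iSup₂_le fun j hj => ?_).trans
      ((lintegral_sqrt_sum_sq_le hσ hZ hsq hn).trans_eq (by simp))
    refine (enorm_sum_range_le_pairs (fun i => Z i ω) hj).trans_eq ?_
    have hn2 : n / 2 = 0 := by omega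
    simp [hn2]
  | succ L ih =>
    intro n σ Z hn hσ hZ hmom
    have hsq : ∀ i < n, ∫ ω, Z i ω ^ 2 ∂ℙ ≤ σ ^ 2 := fun i hi => by simpa using hmom i 1 hi
    have hmeas : AEMeasurable (fun ω => ENNReal.ofReal √(∑ i ∈ Finset.range n, Z i ω ^ 2)) ℙ :=
      (Finset.aemeasurable_fun_sum _ fun i hi =>
        (hZ i (Finset.mem_range.1 hi)).aestronglyMeasurable.aemeasurable.pow_const 2).sqrt
          |>.ennreal_ofReal
    calc ∫⁻ ω, ⨆ j ∈ Set.Iic n, ‖∑ i ∈ Finset.range j, Z i ω‖ₑ ∂ℙ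
        ≤ ∫⁻ ω, (⨆ t ∈ Set.Iic (n / 2),
              ‖∑ i ∈ Finset.range t, (Z (2 * i) ω + Z (2 * i + 1) ω)‖ₑ)
            + ENNReal.ofReal √(∑ i ∈ Finset.range n, Z i ω ^ 2) ∂ℙ :=
          lintegral_mono fun ω => iSup₂_le fun j hj => enorm_sum_range_le_pairs (fun i => Z i ω) hj
      _ ≤ ENNReal.ofReal (σ * 2 ^ β *
              ∑ i ∈ Finset.range (L + 1), √2 ^ i * ((2 : ℝ) ^ β) ^ (L - i))
            + ENNReal.ofReal (σ * √2 ^ (L + 1)) := by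
          rw [lintegral_add_right' _ hmeas]
          refine add_le_add (ih (Z := fun i ω => Z (2 * i) ω + Z (2 * i + 1) ω) (by omega)
            (by positivity) (fun i hi => (hZ _ (by omega)).add (hZ _ (by omega)))
            (integral_sq_sum_pairs_le hmom)) (lintegral_sqrt_sum_sq_le hσ hZ hsq hn)
      _ = _ := by
          rw [← ENNReal.ofReal_add (by positivity) (by positivity),
            geom_sum₂_succ_eq √2 (n := L + 1), Nat.add_sub_cancel]
          ring_nf

/-- The constant in the maximal inequality for partial sums with second moments of order
`t ^ (2 * β)`; the geometric series behind it converges because `√2 < 2 ^ β`. -/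
noncomputable def maximalConst (β : ℝ) : ℝ := ((2 : ℝ) ^ β) ^ 2 / (2 ^ β - √2)

theorem sqrt_two_lt_rpow (hβ : 1 / 2 < β) : √2 < (2 : ℝ) ^ β := by
  rw [Real.sqrt_eq_rpow]
  exact Real.rpow_lt_rpow_of_exponent_lt one_lt_two hβ

theorem maximalConst_nonneg (hβ : 1 / 2 < β) : 0 ≤ maximalConst β :=
  div_nonneg (sq_nonneg _) (sub_nonneg.2 (sqrt_two_lt_rpow hβ).le)

theorem geom_sum_sqrt_two_le (hβ : 1 / 2 < β) (hn : n ≠ 0) :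
    ∑ i ∈ Finset.range (Nat.log 2 n + 1 + 1), √2 ^ i * ((2 : ℝ) ^ β) ^ (Nat.log 2 n + 1 - i)
      ≤ maximalConst β * (n : ℝ) ^ β := by
  have hgap : 0 < (2 : ℝ) ^ β - √2 := sub_pos.2 (sqrt_two_lt_rpow hβ)
  have hgeom := geom_sum₂_mul √2 ((2 : ℝ) ^ β) (Nat.log 2 n + 1 + 1)
  rw [Nat.add_sub_cancel] at hgeom
  have hpow : ((2 : ℝ) ^ β) ^ (Nat.log 2 n + 1 + 1) ≤ ((2 : ℝ) ^ β) ^ 2 * (n : ℝ) ^ β := by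
    rw [pow_succ', sq, mul_assoc]
    exact mul_le_mul_of_nonneg_left (pow_natLog_succ_le (by linarith) hn) (by positivity)
  rw [maximalConst, div_mul_eq_mul_div, le_div_iff₀ hgap]
  have : 0 ≤ √2 ^ (Nat.log 2 n + 1 + 1) := by positivity
  linarith

theorem lintegral_biSup_enorm_sum_le (hβ : 1 / 2 < β) (hσ : 0 ≤ σ)
    (hZ : ∀ i < n, MemLp (Z i) 2 ℙ)
    (hmom : ∀ s t : ℕ, s + t ≤ n →
      ∫ ω, (∑ i ∈ Finset.range t, Z (s + i) ω) ^ 2 ∂ℙ ≤ σ ^ 2 * (t : ℝ) ^ (2 * β)) :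
    ∫⁻ ω, ⨆ j ∈ Set.Iic n, ‖∑ i ∈ Finset.range j, Z i ω‖ₑ ∂ℙ ≤
      ENNReal.ofReal (σ * (maximalConst β * (n : ℝ) ^ β)) := by
  rcases eq_or_ne n 0 with rfl | hn
  · simp
  · exact (lintegral_biSup_enorm_sum_le_of_le_two_pow (Nat.log 2 n + 1)
      (Nat.lt_pow_succ_log_self one_lt_two n).le hσ hZ hmom).trans
      (ENNReal.ofReal_le_ofReal (mul_le_mul_of_nonneg_left (geom_sum_sqrt_two_le hβ hn) hσ))

end MaximalInequality

section SeminormMaximalInequality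

variable {Ω : Type*} [MeasurableSpace Ω] {ℙ : Measure Ω} [IsProbabilityMeasure ℙ]

/-- The constant in the maximal inequality for partial sums of variables whose covariances decay
with exponent `r`. -/
noncomputable def covDecayConst (r : ℝ) : ℝ := √(1 + 2 / (1 - r)) * maximalConst (1 - r / 2)

theorem covDecayConst_nonneg {r : ℝ} (hr1 : r < 1) : 0 ≤ covDecayConst r :=
  mul_nonneg (Real.sqrt_nonneg _) (maximalConst_nonneg (by linarith))

theorem HasCovDecay.lintegral_biSup_enorm_sum_le {ξ : ℕ → Ω → ℝ} {n : ℕ} {φ r : ℝ}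
    (h : HasCovDecay ℙ ξ n (φ ^ 2) r) (hr0 : 0 ≤ r) (hr1 : r < 1) (hφ : 0 ≤ φ) :
    ∫⁻ ω, ⨆ j ∈ Set.Iic n, ‖∑ i ∈ Finset.range j, ξ i ω‖ₑ ∂ℙ ≤
      ENNReal.ofReal (φ * (covDecayConst r * (n : ℝ) ^ (1 - r / 2))) := by
  have : 0 < 1 - r := sub_pos.2 hr1
  have hmom : ∀ s t : ℕ, s + t ≤ n → ∫ ω, (∑ i ∈ Finset.range t, ξ (s + i) ω) ^ 2 ∂ℙ
      ≤ (φ * √(1 + 2 / (1 - r))) ^ 2 * (t : ℝ) ^ (2 * (1 - r / 2)) := by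
    intro s t hst
    rw [mul_pow, Real.sq_sqrt (by positivity), show 2 * (1 - r / 2) = 2 - r by ring]
    exact h.integral_sq_sum_le hr0 hr1 (sq_nonneg φ) s t hst
  refine (_root_.lintegral_biSup_enorm_sum_le (β := 1 - r / 2) (by linarith) (by positivity)
    h.memLp hmom).trans_eq (congrArg ENNReal.ofReal ?_)
  rw [covDecayConst]
  ring

variable {V : Type*} [AddCommGroup V] [Module ℝ V] {ι : Type*} [Countable ι] {N : Seminorm ℝ V}
  {d φ : ι → ℝ} {ℓ : ι → V →ₗ[ℝ] ℝ} {ξ : ℕ → Ω → V} {n : ℕ} {r : ℝ}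

theorem measure_exists_le_seminorm_sum_le
    (hN : ∀ v, ENNReal.ofReal (N v) ≤ weightedMoments d ℓ v) (hd : ∀ i, 0 ≤ d i)
    (hφ : ∀ i, 0 ≤ φ i) (hsum : Summable fun i => d i * φ i) (hr0 : 0 ≤ r) (hr1 : r < 1)
    (h : ∀ i, HasCovDecay ℙ (fun k ω => ℓ i (ξ k ω)) n (φ i ^ 2) r) {t : ℝ} (ht : 0 < t) :
    ℙ {ω | ∃ j ≤ n, t ≤ N (∑ k ∈ Finset.range j, ξ k ω)} ≤
      ENNReal.ofReal ((∑' i, d i * φ i) * covDecayConst r * (n : ℝ) ^ (1 - r / 2) / t) := by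
  set W : ι → Ω → ENNReal := fun i ω =>
    ⨆ j ∈ Set.Iic n, ‖∑ k ∈ Finset.range j, ℓ i (ξ k ω)‖ₑ
  have hWmeas : ∀ i, AEMeasurable (W i) ℙ := fun i =>
    AEMeasurable.biSup _ (Set.to_countable _) fun j hj =>
      (Finset.aemeasurable_fun_sum _ fun k hk => ((h i).memLp
        ((Finset.mem_range.1 hk).trans_le hj)).aestronglyMeasurable.aemeasurable).enorm
  have hsub : {ω | ∃ j ≤ n, t ≤ N (∑ k ∈ Finset.range j, ξ k ω)} ⊆
      {ω | ENNReal.ofReal t ≤ ∑' i, ENNReal.ofReal (d i) * W i ω} := by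
    rintro ω ⟨j, hj, ht⟩
    refine (ENNReal.ofReal_le_ofReal ht).trans ((hN _).trans (ENNReal.tsum_le_tsum fun i => ?_))
    rw [ENNReal.ofReal_mul (hd i), map_sum, ← Real.enorm_eq_ofReal_abs]
    gcongr
    exact le_iSup₂_of_le j hj le_rfl
  have hmean : ∫⁻ ω, ∑' i, ENNReal.ofReal (d i) * W i ω ∂ℙ ≤
      ENNReal.ofReal ((∑' i, d i * φ i) * (covDecayConst r * (n : ℝ) ^ (1 - r / 2))) := by
    rw [lintegral_tsum fun i => (hWmeas i).const_mul _,
      ENNReal.ofReal_mul (tsum_nonneg fun i => mul_nonneg (hd i) (hφ i)),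
      ENNReal.ofReal_tsum_of_nonneg (fun i => mul_nonneg (hd i) (hφ i)) hsum,
      ← ENNReal.tsum_mul_right]
    refine ENNReal.tsum_le_tsum fun i => ?_
    rw [lintegral_const_mul'' _ (hWmeas i), ENNReal.ofReal_mul (hd i), mul_assoc,
      ← ENNReal.ofReal_mul (hφ i)]
    gcongr
    exact (h i).lintegral_biSup_enorm_sum_le hr0 hr1 (hφ i)
  calc ℙ {ω | ∃ j ≤ n, t ≤ N (∑ k ∈ Finset.range j, ξ k ω)}
      ≤ (∫⁻ ω, ∑' i, ENNReal.ofReal (d i) * W i ω ∂ℙ) / ENNReal.ofReal t :=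
        (measure_mono hsub).trans <| meas_ge_le_lintegral_div
          (AEMeasurable.tsum fun i => (hWmeas i).const_mul _)
          (ENNReal.ofReal_pos.2 ht).ne' ENNReal.ofReal_ne_top
    _ ≤ _ := by
        rw [mul_assoc, ENNReal.ofReal_div_of_pos ht]
        gcongr

theorem measure_exists_le_seminorm_sum_comp_le
    (hN : ∀ v, ENNReal.ofReal (N v) ≤ weightedMoments d ℓ v) (hd : ∀ i, 0 ≤ d i)
    (hφ : ∀ i, 0 ≤ φ i) (hsum : Summable fun i => d i * φ i) (hr0 : 0 ≤ r) (hr1 : r < 1)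
    (h : ∀ i, HasCovDecay ℙ (fun k ω => ℓ i (ξ k ω)) n (φ i ^ 2) r) {m t : ℝ} (hm : 0 ≤ m)
    (ht : 0 < t) {J : ℕ} {g : ℕ → ℕ} (hJ : J ≤ ⌊m⌋₊) (hg : ∀ k < J, g k < n)
    (hdist : ∀ k < J, ∀ l < J, |(g k : ℝ) - g l| = |(k : ℝ) - l|) :
    ℙ {ω | ∃ j ≤ J, t ≤ N (∑ k ∈ Finset.range j, ξ (g k) ω)} ≤
      ENNReal.ofReal ((∑' i, d i * φ i) * covDecayConst r * m ^ (1 - r / 2) / t) := by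
  have hK : 0 ≤ (∑' i, d i * φ i) * covDecayConst r :=
    mul_nonneg (tsum_nonneg fun i => mul_nonneg (hd i) (hφ i)) (covDecayConst_nonneg hr1)
  refine (measure_exists_le_seminorm_sum_le hN hd hφ hsum hr0 hr1
    (fun i => (h i).comp hg hdist) ht).trans ?_
  gcongr
  · linarith
  · exact (Nat.cast_le.2 hJ).trans (Nat.floor_le hm)

/-- The increments of `S` away from any anchor `s ≤ n`, in both directions, have maximal tails in
the distance `|j - s|`. -/
def HasMaximalIncrements (ℙ : Measure Ω) (N : V → ℝ) (S : ℕ → Ω → V) (n : ℕ) (K β : ℝ) : Prop :=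
  ∀ ⦃s⦄, s ≤ n →
    HasMaximalTail ℙ (Set.Iic n) (fun j => |(j : ℝ) - s|) (fun j ω => N (S j ω - S s ω)) K β

theorem exists_natFloor_increment_ge {S : ℕ → V} {s j : ℕ} {m t : ℝ} (hj : j ≤ n)
    (hjs : |(j : ℝ) - s| ≤ m) (ht : t ≤ N (S j - S s)) :
    (∃ i ≤ min ⌊m⌋₊ (n - s), t ≤ N (S (s + i) - S s)) ∨
      ∃ i ≤ min ⌊m⌋₊ s, t ≤ N (S s - S (s - i)) := by
  rcases le_total s j with h | h
  · refine .inl ⟨j - s, le_min (Nat.le_floor ?_) (by omega), ?_⟩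
    · rw [Nat.cast_sub h]
      exact (le_abs_self _).trans hjs
    · rwa [Nat.add_sub_cancel' h]
  · refine .inr ⟨s - j, le_min (Nat.le_floor ?_) (by omega), ?_⟩
    · rw [Nat.cast_sub h, ← neg_sub]
      exact (neg_le_abs _).trans hjs
    · rwa [Nat.sub_sub_self h, map_sub_rev]

theorem sum_range_sub_sum_range_sub {M : Type*} [AddCommGroup M] (z : ℕ → M) {i s : ℕ}
    (hi : i ≤ s) :
    ∑ k ∈ Finset.range s, z k - ∑ k ∈ Finset.range (s - i), z k
      = ∑ k ∈ Finset.range i, z (s - 1 - k) := by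
  obtain ⟨q, rfl⟩ := Nat.exists_eq_add_of_le' hi
  rw [Nat.add_sub_cancel, Finset.sum_range_add_sub_sum_range,
    ← Finset.sum_range_reflect (fun k => z (q + k))]
  exact Finset.sum_congr rfl fun k hk => by
    have := Finset.mem_range.1 hk
    congr 1
    omega

theorem hasMaximalIncrements_sum
    (hN : ∀ v, ENNReal.ofReal (N v) ≤ weightedMoments d ℓ v) (hd : ∀ i, 0 ≤ d i)
    (hφ : ∀ i, 0 ≤ φ i) (hsum : Summable fun i => d i * φ i) (hr0 : 0 ≤ r) (hr1 : r < 1)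
    (h : ∀ i, HasCovDecay ℙ (fun k ω => ℓ i (ξ k ω)) n (φ i ^ 2) r) :
    HasMaximalIncrements ℙ N (fun j ω => ∑ k ∈ Finset.range j, ξ k ω) n
      (2 * ((∑' i, d i * φ i) * covDecayConst r)) (1 - r / 2) := by
  intro s hs m t hm ht
  set S : ℕ → Ω → V := fun j ω => ∑ k ∈ Finset.range j, ξ k ω with hS
  set K := (∑' i, d i * φ i) * covDecayConst r
  have hK : 0 ≤ K :=
    mul_nonneg (tsum_nonneg fun i => mul_nonneg (hd i) (hφ i)) (covDecayConst_nonneg hr1)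
  have hblock := fun {J : ℕ} {g : ℕ → ℕ} => measure_exists_le_seminorm_sum_comp_le (J := J) (g := g)
    hN hd hφ hsum hr0 hr1 h hm.le ht
  have hforward : ℙ {ω | ∃ i ≤ min ⌊m⌋₊ (n - s), t ≤ N (S (s + i) ω - S s ω)}
      ≤ ENNReal.ofReal (K * m ^ (1 - r / 2) / t) := by
    simp only [hS, Finset.sum_range_add_sub_sum_range]
    exact hblock (min_le_left _ _) (fun k hk => by omega) fun k _ l _ => by
      push_cast
      rw [add_sub_add_left_eq_sub]
  have hbackward : ℙ {ω | ∃ i ≤ min ⌊m⌋₊ s, t ≤ N (S s ω - S (s - i) ω)}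
      ≤ ENNReal.ofReal (K * m ^ (1 - r / 2) / t) := by
    refine (measure_mono ?_).trans (hblock (g := fun k => s - 1 - k) (min_le_left ⌊m⌋₊ s)
      (fun k hk => by omega) fun k hk l hl => ?_)
    · rintro ω ⟨i, hi, hti⟩
      refine ⟨i, hi, hti.trans_eq (congrArg N ?_)⟩
      exact sum_range_sub_sum_range_sub (fun k => ξ k ω) (hi.trans (min_le_right _ _))
    · rw [Nat.sub_sub, Nat.sub_sub, Nat.cast_sub (by omega), Nat.cast_sub (by omega),
        sub_sub_sub_cancel_left, abs_sub_comm]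
      push_cast
      rw [add_sub_add_left_eq_sub]
  have hsub : {ω | ∃ j ∈ Set.Iic n, |(j : ℝ) - s| ≤ m ∧ t ≤ N (S j ω - S s ω)} ⊆
      {ω | ∃ i ≤ min ⌊m⌋₊ (n - s), t ≤ N (S (s + i) ω - S s ω)} ∪
        {ω | ∃ i ≤ min ⌊m⌋₊ s, t ≤ N (S s ω - S (s - i) ω)} := by
    rintro ω ⟨j, hj, hjs, htj⟩
    exact exists_natFloor_increment_ge (S := fun j => S j ω) hj hjs htj
  calc ℙ {ω | ∃ j ∈ Set.Iic n, |(j : ℝ) - s| ≤ m ∧ t ≤ N (S j ω - S s ω)}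
      ≤ ENNReal.ofReal (K * m ^ (1 - r / 2) / t) + ENNReal.ofReal (K * m ^ (1 - r / 2) / t) :=
        (measure_mono hsub).trans ((measure_union_le _ _).trans (add_le_add hforward hbackward))
    _ = ENNReal.ofReal (2 * K * m ^ (1 - r / 2) / t) := by
        rw [← ENNReal.ofReal_add (by positivity) (by positivity)]
        ring_nf

end SeminormMaximalInequality

section SplitDifference

variable {V : Type*} [AddCommGroup V] [Module ℝ V] {γ n x t : ℝ}

/-- The weighted difference of the means before and after the split `x` of a sample of size `n`,
in terms of the sum `h` of the first `x` observations and the sum `H` of all of them. -/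
noncomputable def splitDiff (γ n x : ℝ) (h H : V) : V :=
  ((x / n) * (1 - x / n)) ^ (1 - γ) • (x⁻¹ • h - (n - x)⁻¹ • (H - h))

theorem splitDiff_eq (hx : 0 < x) (hxn : x < n) (h H : V) :
    splitDiff γ n x h H = (((x / n) * (1 - x / n)) ^ (-γ) / n) • (h - (x / n) • H) := by
  have hn : 0 < n := hx.trans hxn
  have hnx : n - x ≠ 0 := (sub_pos.2 hxn).ne'
  have hsplit : 0 < (x / n) * (1 - x / n) :=
    mul_pos (div_pos hx hn) (sub_pos.2 ((div_lt_one hn).2 hxn))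
  rw [splitDiff, show 1 - γ = -γ + 1 by ring, Real.rpow_add_one hsplit.ne']
  match_scalars <;> field_simp
  ring

theorem splitDiff_reflect (hn : n ≠ 0) (h H : V) :
    splitDiff γ n (n - x) (H - h) H = -splitDiff γ n x h H := by
  have hsplit : ((n - x) / n) * (1 - (n - x) / n) = (x / n) * (1 - x / n) := by
    field_simp
    ring
  rw [splitDiff, splitDiff, hsplit, sub_sub_cancel, sub_sub_cancel]
  module

variable {N : Seminorm ℝ V}

theorem seminorm_splitDiff (hx : 0 < x) (hxn : x < n) (h H : V) :
    N (splitDiff γ n x h H) = N (h - (x / n) • H) / (((x / n) * (1 - x / n)) ^ γ * n) := by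
  have hn : 0 < n := hx.trans hxn
  have hsplit : 0 < (x / n) * (1 - x / n) :=
    mul_pos (div_pos hx hn) (sub_pos.2 ((div_lt_one hn).2 hxn))
  rw [splitDiff_eq hx hxn, map_smul_eq_mul, Real.norm_of_nonneg (by positivity),
    Real.rpow_neg hsplit.le]
  field_simp

theorem div_mul_split_le (hx : 0 < x) (hxt : x ≤ t) (htn : t < n) :
    x / t * ((t / n) * (1 - t / n)) ≤ (x / n) * (1 - x / n) := by
  have ht : 0 < t := hx.trans_le hxt
  have hn : 0 < n := ht.trans htn
  rw [← mul_assoc, div_mul_div_cancel₀ ht.ne']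
  gcongr

theorem rpow_mul_seminorm_le_of_splitDiff_le (hγ : 0 ≤ γ) (hx : 0 < x) (hxt : x ≤ t) (htn : t < n)
    {hx' ht' H : V} (h : N (splitDiff γ n t ht' H) ≤ N (splitDiff γ n x hx' H)) :
    (x / t) ^ γ * N (ht' - (t / n) • H) ≤ N (hx' - (x / n) • H) := by
  have ht : 0 < t := hx.trans_le hxt
  have hn : 0 < n := ht.trans htn
  have ha : 0 < (x / n) * (1 - x / n) :=
    mul_pos (div_pos hx hn) (sub_pos.2 ((div_lt_one hn).2 (hxt.trans_lt htn)))
  have hb : 0 < (t / n) * (1 - t / n) :=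
    mul_pos (div_pos ht hn) (sub_pos.2 ((div_lt_one hn).2 htn))
  rw [seminorm_splitDiff ht htn, seminorm_splitDiff hx (hxt.trans_lt htn),
    div_le_div_iff₀ (by positivity) (by positivity)] at h
  have hweight : (x / t) ^ γ * ((t / n) * (1 - t / n)) ^ γ ≤ ((x / n) * (1 - x / n)) ^ γ := by
    rw [← Real.mul_rpow (by positivity) hb.le]
    exact Real.rpow_le_rpow (by positivity) (div_mul_split_le hx hxt htn) hγ
  refine le_of_mul_le_mul_right ?_ (show 0 < ((t / n) * (1 - t / n)) ^ γ * n by positivity)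
  calc (x / t) ^ γ * N (ht' - (t / n) • H) * (((t / n) * (1 - t / n)) ^ γ * n)
      = N (ht' - (t / n) • H) * ((x / t) ^ γ * ((t / n) * (1 - t / n)) ^ γ * n) := by ring
    _ ≤ N (ht' - (t / n) • H) * (((x / n) * (1 - x / n)) ^ γ * n) := by gcongr
    _ ≤ N (hx' - (x / n) • H) * (((t / n) * (1 - t / n)) ^ γ * n) := h

theorem one_sub_mul_rpow_le_rpow_sub {s : ℝ} (hs : 0 < s) (hγ0 : 0 ≤ γ) (hγ1 : γ ≤ 1) :
    (1 - γ) * (1 - s) * s ^ γ ≤ s ^ γ - s := by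
  have hbernoulli := rpow_one_add_le_one_add_mul_self (s := s - 1) (p := 1 - γ) (by linarith)
    (by linarith) (by linarith)
  rw [add_sub_cancel] at hbernoulli
  have hmul := mul_le_mul_of_nonneg_left hbernoulli (Real.rpow_nonneg hs.le γ)
  rw [← Real.rpow_add hs, add_sub_cancel, Real.rpow_one] at hmul
  linarith

/-- Before the change point the drift is linear in the split, so the interpolation of the
fluctuations is what must make up for the loss of drift. -/
theorem mul_seminorm_le_interpolation (hγ0 : 0 ≤ γ) (hγ1 : γ ≤ 1) (hx : 0 < x) (hxt : x ≤ t)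
    (htn : t < n) {P Sx St H : V}
    (h : N (splitDiff γ n t (St + t • P) H) ≤ N (splitDiff γ n x (Sx + x • P) H)) :
    (1 - γ) * (1 - x / t) * (x / t) ^ γ * N (St + t • P - (t / n) • H)
      ≤ N (Sx - (x / t) • St) := by
  have ht : 0 < t := hx.trans_le hxt
  have hs : 0 < x / t := div_pos hx ht
  have hdecomp : Sx + x • P - (x / n) • H
      = (x / t) • (St + t • P - (t / n) • H) + (Sx - (x / t) • St) := by
    match_scalars <;> field_simp
    ring
  have hle := rpow_mul_seminorm_le_of_splitDiff_le hγ0 hx hxt htn h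
  have hadd := map_add_le_add N ((x / t) • (St + t • P - (t / n) • H)) (Sx - (x / t) • St)
  rw [← hdecomp, map_smul_eq_mul, Real.norm_of_nonneg hs.le] at hadd
  have hreal := mul_le_mul_of_nonneg_right (one_sub_mul_rpow_le_rpow_sub hs hγ0 hγ1)
    (apply_nonneg N (St + t • P - (t / n) • H))
  linarith

theorem le_seminorm_centred {b v κ : ℝ} (ht : 0 ≤ t) (htn : t ≤ n) (hn : 0 < n)
    (hv : v ≤ (t / n) * (1 - t / n)) (hb0 : 0 ≤ b) (hκ : κ ≤ v / 2) {P Q St Sn : V}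
    (hb : b ≤ N (P - Q)) (hSt : N St ≤ κ * b * n) (hSn : N (Sn - St) ≤ κ * b * n) :
    n * v * b / 2 ≤ N (St + t • P - (t / n) • (Sn + t • P + (n - t) • Q)) := by
  have hp0 : 0 ≤ t / n := div_nonneg ht hn.le
  have hp1 : 0 ≤ 1 - t / n := sub_nonneg.2 ((div_le_one hn).2 htn)
  have hdecomp : (n * ((t / n) * (1 - t / n))) • (P - Q)
      = (St + t • P - (t / n) • (Sn + t • P + (n - t) • Q))
        + ((t / n) • (Sn - St) - (1 - t / n) • St) := by
    match_scalars <;> field_simp <;> ring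
  have hsignal : n * v * b ≤ N ((n * ((t / n) * (1 - t / n))) • (P - Q)) := by
    rw [map_smul_eq_mul, Real.norm_of_nonneg (by positivity)]
    gcongr
  have hnoise : N ((t / n) • (Sn - St) - (1 - t / n) • St) ≤ κ * b * n := by
    refine (map_sub_le_add N _ _).trans ?_
    rw [map_smul_eq_mul, map_smul_eq_mul, Real.norm_of_nonneg hp0, Real.norm_of_nonneg hp1]
    linarith [mul_le_mul_of_nonneg_left hSn hp0, mul_le_mul_of_nonneg_left hSt hp1]
  have hκbn : κ * b * n ≤ v / 2 * b * n := by gcongr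
  rw [hdecomp] at hsignal
  linarith [map_add_le_add N (St + t • P - (t / n) • (Sn + t • P + (n - t) • Q))
    ((t / n) • (Sn - St) - (1 - t / n) • St)]

theorem mul_sub_le_seminorm_sub_of_interpolation {a : ℝ} (ha : 0 ≤ a) (hγ1 : γ ≤ 1) (ht : 0 < t)
    (hhalf : 1 / 2 ≤ x / t) (hxt : x ≤ t) (htn : t ≤ n) {Sx St : V} (hSt : N St ≤ a * n)
    (h : 4 * (a * n) * ((1 - x / t) * (x / t) ^ γ) ≤ N (Sx - (x / t) • St)) :
    a * (t - x) ≤ N (Sx - St) := by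
  have hn : 0 < n := ht.trans_le htn
  have hs1 : 0 ≤ 1 - x / t := sub_nonneg.2 ((div_le_one ht).2 hxt)
  have hrpow : x / t ≤ (x / t) ^ γ := by
    simpa using Real.rpow_le_rpow_of_exponent_ge (by linarith) (sub_nonneg.1 hs1) hγ1
  have htriangle : N (Sx - (x / t) • St) ≤ N (Sx - St) + (1 - x / t) * (a * n) := by
    rw [show Sx - (x / t) • St = (Sx - St) + (1 - x / t) • St by module]
    refine (map_add_le_add N _ _).trans ?_
    rw [map_smul_eq_mul, Real.norm_of_nonneg hs1]
    gcongr
  have hdist : t - x ≤ n * (1 - x / t) := by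
    rw [show t - x = t * (1 - x / t) by field_simp]
    gcongr
  calc a * (t - x) ≤ a * (n * (1 - x / t)) := by gcongr
    _ = 4 * (a * n) * ((1 - x / t) * (1 / 2)) - (1 - x / t) * (a * n) := by ring
    _ ≤ 4 * (a * n) * ((1 - x / t) * (x / t) ^ γ) - (1 - x / t) * (a * n) := by
      gcongr
      exact hhalf.trans hrpow
    _ ≤ N (Sx - St) := by linarith

theorem mul_rpow_le_seminorm_of_interpolation {a : ℝ} (ha : 0 ≤ a) (hγ0 : 0 ≤ γ) (hγ1 : γ ≤ 1)
    (hx : 0 < x) (hhalf : x / t ≤ 1 / 2) (hxt : x ≤ t) (htn : t ≤ n) {Sx St : V}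
    (hSt : N St ≤ a * n) (h : 4 * (a * n) * ((1 - x / t) * (x / t) ^ γ) ≤ N (Sx - (x / t) • St)) :
    a * n ^ (1 - γ) * x ^ γ ≤ N Sx := by
  have ht : 0 < t := hx.trans_le hxt
  have hn : 0 < n := ht.trans_le htn
  have hs0 : 0 < x / t := div_pos hx ht
  have hrpow : x / t ≤ (x / t) ^ γ := by
    simpa using Real.rpow_le_rpow_of_exponent_ge hs0 ((div_le_one ht).2 hxt) hγ1
  have htriangle : N (Sx - (x / t) • St) ≤ N Sx + (x / t) * (a * n) := by
    refine (map_sub_le_add N _ _).trans ?_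
    rw [map_smul_eq_mul, Real.norm_of_nonneg hs0.le]
    gcongr
  have hpower : n ^ (1 - γ) * x ^ γ ≤ n * (x / t) ^ γ := by
    rw [Real.rpow_sub hn, Real.rpow_one, Real.div_rpow hx.le ht.le, div_mul_eq_mul_div,
      mul_div_assoc]
    gcongr
  calc a * n ^ (1 - γ) * x ^ γ ≤ a * (n * (x / t) ^ γ) := by
        rw [mul_assoc]
        gcongr
    _ = 4 * (a * n) * (1 / 2 * (x / t) ^ γ) - (x / t) ^ γ * (a * n) := by ring
    _ ≤ 4 * (a * n) * ((1 - x / t) * (x / t) ^ γ) - (x / t) * (a * n) := by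
      gcongr
      linarith
    _ ≤ N Sx := by linarith

/-- A split `x` before the change point `t` can only win if the centred partial sum fluctuates
by a fixed fraction of the drift, either over the whole of `[x, t]` or, when `x` is near the
left end, against the weight `x ^ γ`. -/
theorem increment_ge_of_splitDiff_le {b v : ℝ} (hγ0 : 0 ≤ γ) (hγ1 : γ ≤ 1) (hx : 0 < x)
    (hxt : x ≤ t) (htn : t < n) (hv0 : 0 ≤ v) (hv : v ≤ (t / n) * (1 - t / n)) (hb0 : 0 ≤ b)
    {P Q Sx St Sn : V} (hb : b ≤ N (P - Q)) (hSt : N St ≤ (1 - γ) * v / 8 * b * n)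
    (hSn : N (Sn - St) ≤ (1 - γ) * v / 8 * b * n)
    (h : N (splitDiff γ n t (St + t • P) (Sn + t • P + (n - t) • Q))
      ≤ N (splitDiff γ n x (Sx + x • P) (Sn + t • P + (n - t) • Q))) :
    (1 - γ) * v / 8 * b * (t - x) ≤ N (Sx - St) ∨
      (1 - γ) * v / 8 * b * n ^ (1 - γ) * x ^ γ ≤ N Sx := by
  have ht : 0 < t := hx.trans_le hxt
  have : 0 ≤ 1 - γ := sub_nonneg.2 hγ1
  have hs1 : 0 ≤ 1 - x / t := sub_nonneg.2 ((div_le_one ht).2 hxt)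
  have ha : 0 ≤ (1 - γ) * v / 8 * b := by positivity
  have hinterp : 4 * ((1 - γ) * v / 8 * b * n) * ((1 - x / t) * (x / t) ^ γ)
      ≤ N (Sx - (x / t) • St) := calc
    _ = (1 - γ) * (1 - x / t) * (x / t) ^ γ * (n * v * b / 2) := by ring
    _ ≤ (1 - γ) * (1 - x / t) * (x / t) ^ γ
          * N (St + t • P - (t / n) • (Sn + t • P + (n - t) • Q)) := by
      gcongr
      exact le_seminorm_centred ht.le htn.le (ht.trans htn) hv hb0 (by nlinarith) hb hSt hSn
    _ ≤ N (Sx - (x / t) • St) := mul_seminorm_le_interpolation hγ0 hγ1 hx hxt htn h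
  rcases le_total (1 / 2) (x / t) with hhalf | hhalf
  · exact .inl (mul_sub_le_seminorm_sub_of_interpolation ha hγ1 ht hhalf hxt htn.le hSt hinterp)
  · exact .inr (mul_rpow_le_seminorm_of_interpolation ha hγ0 hγ1 hx hhalf hxt htn.le hSt
      hinterp)

end SplitDifference

section ChangePoint

variable {V : Type*} [AddCommGroup V] [Module ℝ V] {γ v b m : ℝ} {n τ k : ℕ}

/-- The partial sums of a sample whose mean jumps from `P` to `Q` after time `τ`, where `S` are the
partial sums of the centred sample. -/
noncomputable def changeSum (S : ℕ → V) (τ : ℕ) (P Q : V) (k : ℕ) : V :=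
  S k + ((min k τ : ℕ) : ℝ) • P + ((k - τ : ℕ) : ℝ) • Q

theorem changeSum_of_le (S : ℕ → V) (P Q : V) (h : k ≤ τ) :
    changeSum S τ P Q k = S k + (k : ℝ) • P := by
  rw [changeSum, min_eq_left h, Nat.sub_eq_zero_of_le h, Nat.cast_zero, zero_smul, add_zero]

theorem changeSum_of_ge (S : ℕ → V) (P Q : V) (h : τ ≤ k) :
    changeSum S τ P Q k = S k + (τ : ℝ) • P + ((k : ℝ) - τ) • Q := by
  rw [changeSum, min_eq_right h, Nat.cast_sub h]

theorem changeSum_reflect (S : ℕ → V) (P Q : V) (hτ : τ ≤ n) (hk : k ≤ n) :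
    changeSum (fun j => S n - S (n - j)) (n - τ) Q P k
      = changeSum S τ P Q n - changeSum S τ P Q (n - k) := by
  rcases le_total k (n - τ) with h | h
  · rw [changeSum_of_le _ _ _ h, changeSum_of_ge _ _ _ hτ, changeSum_of_ge _ _ _ (by omega),
      Nat.cast_sub hk]
    module
  · rw [changeSum_of_ge _ _ _ h, changeSum_of_ge _ _ _ hτ, changeSum_of_le _ _ _ (by omega),
      Nat.cast_sub hk, Nat.cast_sub hτ]
    module

/-- The size, relative to the signal, of the fluctuations which could move a maximizer by `m` away
from the change point; the three terms account for splits on the scale of their distance to the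
change point, for splits near the end points, and for the partial sum at the change point. -/
noncomputable def fluctuationBound (β γ : ℝ) (n : ℕ) (m : ℝ) : ℝ :=
  2 ^ β / (1 - 2 ^ (β - 1)) * m ^ (β - 1) +
    2 ^ β * ((n : ℝ) ^ (γ - 1) * ∑ l ∈ Finset.range (Nat.log 2 n + 1), ((2 : ℝ) ^ (β - γ)) ^ l) +
    (n : ℝ) ^ (β - 1)

/-- The statistic maximized by the change-point estimator: the seminorm of the weighted difference
of means at the split `k`, for a sample of size `n` with partial sums `T`. -/
noncomputable def splitStat (N : Seminorm ℝ V) (γ : ℝ) (n : ℕ) (T : ℕ → V) (k : ℕ) : ℝ :=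
  N (splitDiff γ n k (T k) (T n))

variable {N : Seminorm ℝ V} {P Q : V}

theorem splitStat_changeSum_reflect {S : ℕ → V} (hS : S 0 = 0) (hτ : τ ≤ n) (hk : k ≤ n)
    (hn : n ≠ 0) :
    splitStat N γ n (changeSum (fun j => S n - S (n - j)) (n - τ) Q P) (n - k)
      = splitStat N γ n (changeSum S τ P Q) k := by
  have hzero : changeSum S τ P Q 0 = 0 := by
    simp only [changeSum, hS, Nat.zero_min, Nat.zero_sub, Nat.cast_zero, zero_smul, add_zero]
  rw [splitStat, splitStat, changeSum_reflect S P Q hτ (Nat.sub_le _ _),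
    changeSum_reflect S P Q hτ le_rfl, Nat.sub_sub_self hk, Nat.sub_self, hzero, sub_zero,
    Nat.cast_sub hk, splitDiff_reflect (Nat.cast_ne_zero.2 hn), map_neg_eq_map]

theorem increment_ge_of_splitStat_le {S : ℕ → V} (hγ0 : 0 ≤ γ) (hγ1 : γ ≤ 1)
    (hk : 0 < k) (hkτ : k ≤ τ) (hτn : τ < n) (hv0 : 0 ≤ v)
    (hv : v ≤ ((τ : ℝ) / n) * (1 - (τ : ℝ) / n)) (hb0 : 0 ≤ b) (hb : b ≤ N (P - Q))
    (h : splitStat N γ n (changeSum S τ P Q) τ ≤ splitStat N γ n (changeSum S τ P Q) k) :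
    (1 - γ) * v / 8 * b * ((τ : ℝ) - k) ≤ N (S k - S τ) ∨
      (1 - γ) * v / 8 * b * (n : ℝ) ^ (1 - γ) * (k : ℝ) ^ γ ≤ N (S k) ∨
        (1 - γ) * v / 8 * b * n ≤ N (S τ) ∨ (1 - γ) * v / 8 * b * n ≤ N (S n - S τ) := by
  rw [splitStat, splitStat, changeSum_of_le _ _ _ le_rfl, changeSum_of_le _ _ _ hkτ,
    changeSum_of_ge _ _ _ hτn.le] at h
  rcases le_or_gt ((1 - γ) * v / 8 * b * n) (N (S τ)) with hSτ | hSτ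
  · exact .inr (.inr (.inl hSτ))
  rcases le_or_gt ((1 - γ) * v / 8 * b * n) (N (S n - S τ)) with hSn | hSn
  · exact .inr (.inr (.inr hSn))
  exact (increment_ge_of_splitDiff_le hγ0 hγ1 (Nat.cast_pos.2 hk) (Nat.cast_le.2 hkτ)
    (Nat.cast_lt.2 hτn) hv0 hv hb0 hb hSτ.le hSn.le h).imp_right .inl

variable {Ω : Type*} [MeasurableSpace Ω] {ℙ : Measure Ω} {S : ℕ → Ω → V} {K β : ℝ}

theorem HasMaximalIncrements.reflect (h : HasMaximalIncrements ℙ N S n K β) :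
    HasMaximalIncrements ℙ N (fun j ω => S n ω - S (n - j) ω) n K β := by
  intro s hs m t hm ht
  refine (measure_mono ?_).trans (h (Nat.sub_le n s) hm ht)
  rintro ω ⟨j, hj, hdist, hN⟩
  refine ⟨n - j, Nat.sub_le n j, ?_, ?_⟩
  · simp only [Nat.cast_sub hs, Nat.cast_sub (Set.mem_Iic.1 hj)]
    rwa [sub_sub_sub_cancel_left, abs_sub_comm]
  · dsimp only at hN ⊢
    rwa [sub_sub_sub_cancel_left, map_sub_rev] at hN

theorem HasMaximalIncrements.measure_exists_mul_dist_le (h : HasMaximalIncrements ℙ N S n K β)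
    (hK : 0 ≤ K) (hβ : β < 1) {s : ℕ} (hs : s ≤ n) {a : ℝ} (ha : 0 < a) (hm : 0 < m) :
    ℙ {ω | ∃ j ≤ n, m ≤ |(j : ℝ) - s| ∧ a * |(j : ℝ) - s| ≤ N (S j ω - S s ω)}
      ≤ ENNReal.ofReal (K / a * (2 ^ β / (1 - 2 ^ (β - 1)) * m ^ (β - 1))) := by
  refine ((h hs).measure_exists_mul_le hK hβ
    ((Set.finite_Iic n).image _).bddAbove ha hm).trans_eq ?_
  congr 1
  ring

theorem HasMaximalIncrements.measure_exists_mul_rpow_le (h : HasMaximalIncrements ℙ N S n K β)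
    (hS : ∀ ω, S 0 ω = 0) (hK : 0 ≤ K) (hγ : 0 ≤ γ) (hn : 0 < n) {a : ℝ} (ha : 0 < a) :
    ℙ {ω | ∃ j ≤ n, 0 < j ∧ a * (n : ℝ) ^ (1 - γ) * (j : ℝ) ^ γ ≤ N (S j ω)}
      ≤ ENNReal.ofReal (K / a * (2 ^ β * ((n : ℝ) ^ (γ - 1) *
          ∑ l ∈ Finset.range (Nat.log 2 n + 1), ((2 : ℝ) ^ (β - γ)) ^ l))) := by
  have hn' : (0 : ℝ) < n := Nat.cast_pos.2 hn
  have hpeel := (h (Nat.zero_le n)).measure_exists_mul_rpow_le hK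
    (c := a * (n : ℝ) ^ (1 - γ)) (by positivity) one_pos hγ (Nat.log 2 n + 1)
  simp only [Nat.cast_zero, sub_zero, Nat.abs_cast, hS, one_mul, Real.one_rpow] at hpeel
  refine (measure_mono ?_).trans (hpeel.trans_eq ?_)
  · rintro ω ⟨j, hjn, hj, hN⟩
    exact ⟨j, hjn, Nat.one_le_cast.2 hj,
      mod_cast hjn.trans_lt (Nat.lt_pow_succ_log_self one_lt_two n), hN⟩
  · rw [← neg_sub 1 γ, Real.rpow_neg hn'.le]
    congr 1
    field_simp

theorem HasMaximalIncrements.measure_exists_mul_le (h : HasMaximalIncrements ℙ N S n K β)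
    {s : ℕ} (hs : s ≤ n) (hn : 0 < n) {a : ℝ} (ha : 0 < a) :
    ℙ {ω | ∃ j ≤ n, a * n ≤ N (S j ω - S s ω)} ≤ ENNReal.ofReal (K / a * (n : ℝ) ^ (β - 1)) := by
  have hn' : (0 : ℝ) < n := Nat.cast_pos.2 hn
  refine (measure_mono ?_).trans ((h hs hn' (mul_pos ha hn')).trans_eq ?_)
  · rintro ω ⟨j, hj, hN⟩
    refine ⟨j, hj, ?_, hN⟩
    rw [abs_sub_le_iff, sub_le_iff_le_add, sub_le_iff_le_add]
    exact ⟨mod_cast hj.trans (Nat.le_add_right _ _), mod_cast hs.trans (Nat.le_add_right _ _)⟩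
  · rw [Real.rpow_sub_one hn'.ne']
    congr 1
    field_simp

theorem HasMaximalIncrements.measure_exists_left_le (h : HasMaximalIncrements ℙ N S n K β)
    (hS : ∀ ω, S 0 ω = 0) (hK : 0 ≤ K) (hβ : β < 1) (hγ0 : 0 ≤ γ) (hγ1 : γ < 1) (hτn : τ < n)
    (hv0 : 0 < v) (hv : v ≤ ((τ : ℝ) / n) * (1 - (τ : ℝ) / n)) (hb0 : 0 < b)
    (hb : b ≤ N (P - Q)) (hm : 0 < m) :
    ℙ {ω | ∃ k : ℕ, 0 < k ∧ k + m ≤ τ ∧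
        splitStat N γ n (changeSum (S · ω) τ P Q) τ
          ≤ splitStat N γ n (changeSum (S · ω) τ P Q) k}
      ≤ ENNReal.ofReal (K / ((1 - γ) * v / 8 * b) * fluctuationBound β γ n m) := by
  have hn : 0 < n := Nat.zero_lt_of_lt hτn
  have : 0 < 1 - γ := sub_pos.2 hγ1
  have ha : 0 < (1 - γ) * v / 8 * b := by positivity
  have hq : 0 < 1 - (2 : ℝ) ^ (β - 1) :=
    sub_pos.2 (Real.rpow_lt_one_of_one_lt_of_neg one_lt_two (sub_neg.2 hβ))
  rw [fluctuationBound, mul_add, mul_add, ENNReal.ofReal_add (by positivity) (by positivity),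
    ENNReal.ofReal_add (by positivity) (by positivity)]
  refine le_trans ?_ (add_le_add (add_le_add
    (h.measure_exists_mul_dist_le hK hβ hτn.le ha hm)
    (h.measure_exists_mul_rpow_le hS hK hγ0 hn ha)) (h.measure_exists_mul_le hτn.le hn ha))
  refine le_trans (measure_mono ?_)
    ((measure_union_le _ _).trans (add_le_add_left (measure_union_le _ _) _))
  rintro ω ⟨k, hk, hkm, hsplit⟩
  have hkτ : (k : ℝ) ≤ τ := by linarith
  have hkn : k ≤ n := (Nat.cast_le.1 hkτ).trans hτn.le
  have hdist : |(k : ℝ) - τ| = τ - k := by rw [abs_sub_comm, abs_of_nonneg (sub_nonneg.2 hkτ)]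
  rcases increment_ge_of_splitStat_le hγ0 hγ1.le hk (Nat.cast_le.1 hkτ) hτn hv0.le hv
    hb0.le hb hsplit with hlinear | hpower | hτ | hn
  · exact .inl (.inl ⟨k, hkn, by linarith, by rwa [hdist]⟩)
  · exact .inl (.inr ⟨k, hkn, hk, hpower⟩)
  · exact .inr ⟨0, Nat.zero_le n, by rwa [hS, zero_sub, map_neg_eq_map]⟩
  · exact .inr ⟨n, le_rfl, hn⟩

theorem HasMaximalIncrements.measure_exists_far_le (h : HasMaximalIncrements ℙ N S n K β)
    (hS : ∀ ω, S 0 ω = 0) (hK : 0 ≤ K) (hβ : β < 1) (hγ0 : 0 ≤ γ) (hγ1 : γ < 1) (hτ : 0 < τ)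
    (hτn : τ < n) (hv0 : 0 < v) (hv : v ≤ ((τ : ℝ) / n) * (1 - (τ : ℝ) / n)) (hb0 : 0 < b)
    (hb : b ≤ N (P - Q)) (hm : 0 < m) :
    ℙ {ω | ∃ k : ℕ, 0 < k ∧ k < n ∧ m ≤ |(k : ℝ) - τ| ∧
        splitStat N γ n (changeSum (S · ω) τ P Q) τ
          ≤ splitStat N γ n (changeSum (S · ω) τ P Q) k}
      ≤ 2 * ENNReal.ofReal (K / ((1 - γ) * v / 8 * b) * fluctuationBound β γ n m) := by
  have hn : (n : ℝ) ≠ 0 := Nat.cast_ne_zero.2 (Nat.ne_zero_of_lt hτn)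
  have hleft := h.measure_exists_left_le hS hK hβ hγ0 hγ1 hτn hv0 hv hb0 hb hm
  have hright := h.reflect.measure_exists_left_le (τ := n - τ) (P := Q) (Q := P)
    (fun ω => sub_self _) hK hβ hγ0 hγ1 (Nat.sub_lt (hτ.trans hτn) hτ) hv0
    (by
      rw [Nat.cast_sub hτn.le]
      convert hv using 1
      field_simp
      ring) hb0 (by rwa [map_sub_rev]) hm
  rw [two_mul]
  refine (measure_mono ?_).trans ((measure_union_le _ _).trans (add_le_add hleft hright))
  rintro ω ⟨k, hk, hkn, hdist, hsplit⟩
  rcases le_total k τ with hkτ | hkτ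
  · refine .inl ⟨k, hk, ?_, hsplit⟩
    rw [abs_sub_comm, abs_of_nonneg (sub_nonneg.2 (Nat.cast_le.2 hkτ))] at hdist
    linarith
  · refine .inr ⟨n - k, Nat.sub_pos_of_lt hkn, ?_, ?_⟩
    · rw [abs_of_nonneg (sub_nonneg.2 (Nat.cast_le.2 hkτ))] at hdist
      rw [Nat.cast_sub hkn.le, Nat.cast_sub hτn.le]
      linarith
    · have hreflect := fun j (hj : j ≤ n) => splitStat_changeSum_reflect (N := N) (γ := γ) (P := P)
        (Q := Q) (S := (S · ω)) (hS ω) hτn.le hj (Nat.ne_zero_of_lt hτn)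
      rwa [hreflect τ hτn.le, hreflect k hkn.le]

end ChangePoint

section Consistency

theorem IsOp.of_eventually_le {Ω : Type*} [MeasurableSpace Ω] {μ : Measure Ω} {A : ℕ → Ω → ℝ}
    {c : ℕ → ℝ} {u : ℝ → ℝ} {v : ℕ → ℝ} (hu : Tendsto u atTop (nhds 0))
    (hv : Tendsto v atTop (nhds 0))
    (h : ∀ᶠ M in atTop, ∀ᶠ n in atTop,
      μ {ω | M * c n < |A n ω|} ≤ ENNReal.ofReal (u M + v n)) : IsOp μ A c := by
  have hu' : Tendsto (fun M => ENNReal.ofReal (u M)) atTop (nhds 0) := by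
    simpa only [ENNReal.ofReal_zero] using ENNReal.tendsto_ofReal hu
  refine tendsto_of_tendsto_of_tendsto_of_le_of_le' tendsto_const_nhds hu'
    (Eventually.of_forall fun _ => zero_le) ?_
  filter_upwards [h] with M hM
  have hlim : Tendsto (fun n => ENNReal.ofReal (u M + v n)) atTop
      (nhds (ENNReal.ofReal (u M))) := by
    simpa only [add_zero] using ENNReal.tendsto_ofReal (hv.const_add (u M))
  exact (limsup_le_limsup hM).trans_eq hlim.limsup_eq

theorem exists_fluctuationBound_le {r : ℝ} (hr : 0 < r) (γ : ℝ) :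
    ∃ A, ∀ n : ℕ, n ≠ 0 → ∀ m : ℝ, 0 < m →
      fluctuationBound (1 - r / 2) γ n m ≤ A * (m ^ (-(r / 2)) + deviationRate γ r n) := by
  obtain ⟨C, hC, hsum⟩ := exists_rpow_mul_geom_sum_le_deviationRate γ r
  have hβ : 1 - r / 2 - 1 = -(r / 2) := by ring
  have hq : 0 < 1 - (2 : ℝ) ^ (-(r / 2)) :=
    sub_pos.2 (Real.rpow_lt_one_of_one_lt_of_neg one_lt_two (by linarith))
  refine ⟨2 ^ (1 - r / 2) / (1 - 2 ^ (-(r / 2))) + 2 ^ (1 - r / 2) * C + 1, fun n hn m hm => ?_⟩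
  have hrate : (n : ℝ) ^ (-(r / 2)) ≤ deviationRate γ r n := by
    rw [← neg_div]
    exact rpow_le_deviationRate γ r n
  have hrate0 : 0 ≤ deviationRate γ r n := le_trans (by positivity) hrate
  rw [fluctuationBound, hβ, add_mul, add_mul, one_mul, mul_assoc (2 ^ (1 - r / 2)) C]
  refine add_le_add (add_le_add ?_ ?_) (hrate.trans (le_add_of_nonneg_left (by positivity)))
  · gcongr
    exact le_add_of_nonneg_right hrate0
  · refine mul_le_mul_of_nonneg_left ?_ (by positivity)
    exact (hsum n hn).trans (mul_le_mul_of_nonneg_left (le_add_of_nonneg_left (by positivity)) hC)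

variable {γ r θ : ℝ} {b : ℕ → ℝ} {B : ℝ}

theorem pos_of_tendsto_inv_mul_deviationRate (hb : ∀ n, 0 < b n) (hB : ∀ᶠ n in atTop, b n ≤ B)
    (h : Tendsto (fun n => (b n)⁻¹ * deviationRate γ r n) atTop (nhds 0)) : 0 < r := by
  by_contra! hr
  obtain ⟨n₀, hn₀⟩ := hB.exists
  have hB0 : 0 < B := (hb n₀).trans_le hn₀
  obtain ⟨n, hBn, hlt, hn⟩ := (hB.and ((h.eventually (gt_mem_nhds (inv_pos.2 hB0))).and
    (eventually_ge_atTop 1))).exists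
  have hone : (1 : ℝ) ≤ deviationRate γ r n :=
    (Real.one_le_rpow (Nat.one_le_cast.2 hn) (by linarith)).trans (rpow_le_deviationRate γ r n)
  refine hlt.not_ge ?_
  calc B⁻¹ ≤ (b n)⁻¹ := inv_anti₀ (hb n) hBn
    _ ≤ (b n)⁻¹ * deviationRate γ r n := le_mul_of_one_le_right (inv_nonneg.2 (hb n).le) hone

theorem eventually_natFloor_mul_split (hθ0 : 0 < θ) (hθ1 : θ < 1) :
    ∀ᶠ n : ℕ in atTop, 0 < ⌊(n : ℝ) * θ⌋₊ ∧ ⌊(n : ℝ) * θ⌋₊ < n ∧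
      θ * (1 - θ) / 2 ≤ ((⌊(n : ℝ) * θ⌋₊ : ℝ) / n) * (1 - (⌊(n : ℝ) * θ⌋₊ : ℝ) / n) := by
  have hlim : Tendsto (fun n : ℕ => (⌊(n : ℝ) * θ⌋₊ : ℝ) / n) atTop (nhds θ) := by
    simpa only [Function.comp_def, mul_comm θ] using
      (tendsto_nat_floor_mul_div_atTop hθ0.le).comp tendsto_natCast_atTop_atTop
  have hhalf : θ * (1 - θ) / 2 < θ * (1 - θ) := half_lt_self (mul_pos hθ0 (sub_pos.2 hθ1))
  filter_upwards [hlim.eventually (lt_mem_nhds hθ0), hlim.eventually (gt_mem_nhds hθ1),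
    (hlim.mul (hlim.const_sub 1)).eventually (lt_mem_nhds hhalf), eventually_gt_atTop 0]
    with n h0 h1 hsplit hn
  have hn' : (0 : ℝ) < n := Nat.cast_pos.2 hn
  exact ⟨Nat.cast_pos.1 ((div_pos_iff_of_pos_right hn').1 h0),
    Nat.cast_lt.1 ((div_lt_one hn').1 h1), hsplit.le⟩

theorem le_abs_sub_natFloor {n k : ℕ} {m : ℝ} (hn : 0 < n) (hθ : 0 ≤ θ) (hm : 1 ≤ m)
    (h : (n : ℝ)⁻¹ * (2 * m) < |(n : ℝ)⁻¹ * k - θ|) : m ≤ |(k : ℝ) - ⌊(n : ℝ) * θ⌋₊| := by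
  have hn' : (0 : ℝ) < n := Nat.cast_pos.2 hn
  rw [show (n : ℝ)⁻¹ * k - θ = (n : ℝ)⁻¹ * (k - n * θ) by field_simp, abs_mul,
    abs_of_pos (inv_pos.2 hn'), mul_lt_mul_iff_right₀ (inv_pos.2 hn')] at h
  have hfloor : |(⌊(n : ℝ) * θ⌋₊ : ℝ) - n * θ| ≤ 1 := by
    have := Nat.floor_le (show 0 ≤ (n : ℝ) * θ by positivity)
    have := Nat.lt_floor_add_one ((n : ℝ) * θ)
    rw [abs_le]
    constructor <;> linarith
  have := abs_sub_le (k : ℝ) ⌊(n : ℝ) * θ⌋₊ (n * θ)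
  linarith

theorem inv_mul_mul_rpow_rpow {β M : ℝ} (hβ : 0 < β) (hM : 0 ≤ M) (hr : r ≠ 0) :
    β⁻¹ * (M * β ^ (-(2 / r))) ^ (-(r / 2)) = M ^ (-(r / 2)) := by
  rw [Real.mul_rpow hM (by positivity), ← Real.rpow_mul hβ.le,
    show -(2 / r) * -(r / 2) = 1 by field_simp, Real.rpow_one, mul_left_comm,
    inv_mul_cancel₀ hβ.ne', mul_one]

theorem exists_inv_mul_fluctuationBound_le (hr : 0 < r) (γ : ℝ) :
    ∃ A, ∀ n : ℕ, n ≠ 0 → ∀ β M : ℝ, 0 < β → 0 < M →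
      β⁻¹ * fluctuationBound (1 - r / 2) γ n (M * β ^ (-(2 / r)))
        ≤ A * M ^ (-(r / 2)) + A * (β⁻¹ * deviationRate γ r n) := by
  obtain ⟨A, hfluct⟩ := exists_fluctuationBound_le hr γ
  refine ⟨A, fun n hn β M hβ hM => ?_⟩
  rw [← inv_mul_mul_rpow_rpow hβ hM.le hr.ne']
  refine (mul_le_mul_of_nonneg_left (hfluct n hn _ (by positivity))
    (inv_nonneg.2 hβ.le)).trans_eq ?_
  ring

theorem one_le_mul_rpow_neg {β M : ℝ} (hβ : 0 < β) (hβB : β ≤ B) (hr : 0 < r)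
    (hM : B ^ (2 / r) ≤ M) : 1 ≤ M * β ^ (-(2 / r)) := by
  rw [Real.rpow_neg hβ.le, ← div_eq_mul_inv, one_le_div (by positivity)]
  exact (Real.rpow_le_rpow hβ.le hβB (by positivity)).trans hM

variable {V : Type*} [AddCommGroup V] [Module ℝ V] {N : Seminorm ℝ V} {P Q : ℕ → V}
  {Ω : Type*} [MeasurableSpace Ω] {ℙ : Measure Ω} {S : ℕ → ℕ → Ω → V} {k : ℕ → Ω → ℕ} {K : ℝ}

theorem isOp_argmax_splitStat (hS : ∀ n ω, S n 0 ω = 0)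
    (h : ∀ n, HasMaximalIncrements ℙ N (S n) n K (1 - r / 2)) (hK : 0 ≤ K) (hγ0 : 0 ≤ γ)
    (hγ1 : γ < 1) (hθ0 : 0 < θ) (hθ1 : θ < 1) (hb : ∀ n, 0 < b n)
    (hbN : ∀ᶠ n in atTop, b n ≤ N (P n - Q n)) (hB : ∀ᶠ n in atTop, b n ≤ B)
    (hrate : Tendsto (fun n => (b n)⁻¹ * deviationRate γ r n) atTop (nhds 0))
    (hk : ∀ n, 1 < n → ∀ ω, k n ω ∈ Finset.Ico 1 n ∧ ∀ j ∈ Finset.Ico 1 n,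
      splitStat N γ n (changeSum (S n · ω) ⌊(n : ℝ) * θ⌋₊ (P n) (Q n)) j
        ≤ splitStat N γ n (changeSum (S n · ω) ⌊(n : ℝ) * θ⌋₊ (P n) (Q n)) (k n ω)) :
    IsOp ℙ (fun n ω => (n : ℝ)⁻¹ * k n ω - θ) (fun n => (n : ℝ)⁻¹ * b n ^ (-(2 / r))) := by
  have hr : 0 < r := pos_of_tendsto_inv_mul_deviationRate hb hB hrate
  obtain ⟨A, hfluct⟩ := exists_inv_mul_fluctuationBound_le hr γ
  have hv : 0 < θ * (1 - θ) / 2 := half_pos (mul_pos hθ0 (sub_pos.2 hθ1))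
  obtain ⟨κ, hκ_eq⟩ : ∃ κ, (1 - γ) * (θ * (1 - θ) / 2) / 8 = κ := ⟨_, rfl⟩
  have hκ : 0 < κ := hκ_eq ▸ div_pos (mul_pos (sub_pos.2 hγ1) hv) (by norm_num)
  set L := 2 * (K / κ) with hL
  have hL0 : 0 ≤ L := by positivity
  refine IsOp.of_eventually_le (u := fun M => L * (A * (M / 2) ^ (-(r / 2))))
    (v := fun n => L * (A * ((b n)⁻¹ * deviationRate γ r n))) ?_ ?_ ?_
  · simpa only [mul_zero, Function.comp_def, id] using (((tendsto_rpow_neg_atTop (half_pos hr)).comp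
      (tendsto_id.atTop_div_const zero_lt_two)).const_mul A).const_mul L
  · simpa only [mul_zero] using (hrate.const_mul A).const_mul L
  filter_upwards [eventually_ge_atTop (2 * B ^ (2 / r)), eventually_gt_atTop 0] with M hMB hM
  filter_upwards [hbN, hB, eventually_natFloor_mul_split hθ0 hθ1] with n hbn hBn ⟨hτ, hτn, hsplit⟩
  have hn : 0 < n := hτ.trans hτn
  have hbn0 : 0 < b n := hb n
  have hm : 1 ≤ M / 2 * b n ^ (-(2 / r)) := one_le_mul_rpow_neg hbn0 hBn hr (by linarith)
  have hfar := (h n).measure_exists_far_le (hS n) hK (by linarith) hγ0 hγ1 hτ hτn hv hsplit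
    hbn0 hbn (zero_lt_one.trans_le hm)
  rw [hκ_eq] at hfar
  refine (measure_mono fun ω hω => ?_).trans (hfar.trans ?_)
  · obtain ⟨hmem, hmax⟩ := hk n (by omega) ω
    refine ⟨k n ω, (Finset.mem_Ico.1 hmem).1, (Finset.mem_Ico.1 hmem).2,
      le_abs_sub_natFloor hn hθ0.le hm (lt_of_eq_of_lt ?_ hω), hmax _ (Finset.mem_Ico.2 ⟨hτ, hτn⟩)⟩
    ring
  · rw [← ENNReal.ofReal_ofNat, ← ENNReal.ofReal_mul zero_le_two]
    refine ENNReal.ofReal_le_ofReal ?_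
    rw [← mul_add, hL]
    refine le_trans (le_of_eq ?_)
      (mul_le_mul_of_nonneg_left (hfluct n hn.ne' (b n) (M / 2) hbn0 (half_pos hM)) hL0)
    field_simp

end Consistency

section SecondMomentNorm

variable {E ι : Type*} [MeasurableSpace E] {P Q : ι → Measure E} {f : E → ℝ}

/-- The norm `‖f‖ = sup_i (P_i(f²) + Q_i(f²))^{1/2}`; it takes the junk value `0` if the supremum is
infinite. -/
noncomputable def secondMomentNorm (P Q : ι → Measure E) (f : E → ℝ) : ℝ :=
  ⨆ i, √(∫ x, f x ^ 2 ∂(P i) + ∫ x, f x ^ 2 ∂(Q i))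

theorem secondMomentNorm_nonneg (P Q : ι → Measure E) (f : E → ℝ) : 0 ≤ secondMomentNorm P Q f :=
  Real.iSup_nonneg fun _ => Real.sqrt_nonneg _

theorem integral_sq_le_of_abs_le {M : ℝ} (hM : ∀ x, |f x| ≤ M) (μ : Measure E)
    [IsProbabilityMeasure μ] : ∫ x, f x ^ 2 ∂μ ≤ M ^ 2 := by
  have hle := norm_integral_le_of_norm_le_const (μ := μ) (f := fun x => f x ^ 2) (C := M ^ 2)
    (ae_of_all _ fun x => by
      rw [norm_pow]
      exact pow_le_pow_left₀ (norm_nonneg _) (hM x) 2)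
  rw [probReal_univ, mul_one] at hle
  exact (Real.le_norm_self _).trans hle

variable [∀ i, IsProbabilityMeasure (P i)] [∀ i, IsProbabilityMeasure (Q i)]

theorem integral_sq_add_le_secondMomentNorm_sq (hb : Bornology.IsBounded (Set.range f)) (i : ι) :
    ∫ x, f x ^ 2 ∂(P i) + ∫ x, f x ^ 2 ∂(Q i) ≤ secondMomentNorm P Q f ^ 2 := by
  obtain ⟨M, hM⟩ := hb.exists_norm_le
  have hint := integral_sq_le_of_abs_le fun x => hM (f x) ⟨x, rfl⟩
  have hbdd : BddAbove (Set.range fun i => √(∫ x, f x ^ 2 ∂(P i) + ∫ x, f x ^ 2 ∂(Q i))) := by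
    refine ⟨√(M ^ 2 + M ^ 2), ?_⟩
    rintro _ ⟨k, rfl⟩
    exact Real.sqrt_le_sqrt (add_le_add (hint _) (hint _))
  exact (Real.sqrt_le_left (secondMomentNorm_nonneg P Q f)).1 (le_ciSup hbdd i)

theorem integral_sq_left_le_secondMomentNorm_sq (hb : Bornology.IsBounded (Set.range f)) (i : ι) :
    ∫ x, f x ^ 2 ∂(P i) ≤ secondMomentNorm P Q f ^ 2 :=
  (le_add_of_nonneg_right (integral_nonneg fun _ => sq_nonneg _)).trans
    (integral_sq_add_le_secondMomentNorm_sq hb i)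

theorem integral_sq_right_le_secondMomentNorm_sq (hb : Bornology.IsBounded (Set.range f)) (i : ι) :
    ∫ x, f x ^ 2 ∂(Q i) ≤ secondMomentNorm P Q f ^ 2 :=
  (le_add_of_nonneg_left (integral_nonneg fun _ => sq_nonneg _)).trans
    (integral_sq_add_le_secondMomentNorm_sq hb i)

theorem integral_sq_le_secondMomentNorm_sq_of_eq_ite (hb : Bornology.IsBounded (Set.range f))
    {μ : Measure E} {p : Prop} [Decidable p] {i : ι} (hμ : μ = if p then P i else Q i) :
    ∫ x, f x ^ 2 ∂μ ≤ secondMomentNorm P Q f ^ 2 := by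
  split_ifs at hμ
  · exact hμ ▸ integral_sq_left_le_secondMomentNorm_sq hb i
  · exact hμ ▸ integral_sq_right_le_secondMomentNorm_sq hb i

end SecondMomentNorm

section EmpiricalMeasures

variable {Ω : Type*} [MeasurableSpace Ω] {ℙ : Measure Ω}

theorem hasCovDecay_of_lt {ξ : ℕ → Ω → ℝ} {n : ℕ} {V r : ℝ}
    (hLp : ∀ i < n, MemLp (ξ i) 2 ℙ) (hsq : ∀ i < n, ∫ ω, ξ i ω ^ 2 ∂ℙ ≤ V)
    (hmul : ∀ i m, 1 ≤ m → i + m < n → |∫ ω, ξ i ω * ξ (i + m) ω ∂ℙ| ≤ V * (m : ℝ) ^ (-r)) :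
    HasCovDecay ℙ ξ n V r := by
  have hlt : ∀ i j, i < j → j < n → |∫ ω, ξ i ω * ξ j ω ∂ℙ| ≤ V * |(i : ℝ) - j| ^ (-r) := by
    intro i j hij hj
    obtain ⟨m, rfl⟩ := Nat.exists_eq_add_of_le hij.le
    rw [show |(i : ℝ) - (i + m : ℕ)| = m by rw [Nat.cast_add, sub_add_cancel_left, abs_neg,
      Nat.abs_cast]]
    exact hmul i m (by omega) hj
  refine ⟨hLp, hsq, fun i j hi hj hij => ?_⟩
  rcases lt_or_gt_of_ne hij with h | h
  · exact hlt i j h hj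
  · simpa only [mul_comm, abs_sub_comm] using hlt j i h hi

variable [IsProbabilityMeasure ℙ]

theorem variance'_le_integral_sq {Y : Ω → ℝ} (hY : MemLp Y 2 ℙ) :
    variance' ℙ Y ≤ ∫ ω, Y ω ^ 2 ∂ℙ := by
  have h := ProbabilityTheory.variance_le_expectation_sq hY.aestronglyMeasurable
  rw [ProbabilityTheory.variance_eq_integral hY.aemeasurable] at h
  simpa only [variance', covar, sq, Pi.pow_apply] using h

/-- Correlations among the first `n` variables `Y i` at lag `m` are at most `C * m ^ (-ρ)`; the
bound is multiplied out, so that it makes sense for variables of variance zero. -/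
def HasCorrDecay (ℙ : Measure Ω) (Y : ℕ → Ω → ℝ) (n : ℕ) (C ρ : ℝ) : Prop :=
  ∀ i m, 1 ≤ m → i + m < n → |covar ℙ (Y i) (Y (i + m))|
    ≤ C * (m : ℝ) ^ (-ρ) * √(variance' ℙ (Y i)) * √(variance' ℙ (Y (i + m)))

theorem HasCorrDecay.hasCovDecay_sub_integral {Y : ℕ → Ω → ℝ} {n : ℕ} {a C ρ r : ℝ}
    (hcorr : HasCorrDecay ℙ Y n C ρ) (hY : ∀ i < n, MemLp (Y i) 2 ℙ) (ha : 0 ≤ a)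
    (hsq : ∀ i < n, ∫ ω, Y i ω ^ 2 ∂ℙ ≤ a ^ 2) (hr : r ≤ ρ) :
    HasCovDecay ℙ (fun i ω => Y i ω - ∫ ω', Y i ω' ∂ℙ) n ((√(max C 1) * a) ^ 2) r := by
  have hmax : (√(max C 1) * a) ^ 2 = max C 1 * a ^ 2 := by
    rw [mul_pow, Real.sq_sqrt (zero_le_one.trans (le_max_right _ _))]
  have hvar : ∀ i < n, variance' ℙ (Y i) ≤ a ^ 2 := fun i hi =>
    (variance'_le_integral_sq (hY i hi)).trans (hsq i hi)
  have hsd : ∀ i < n, √(variance' ℙ (Y i)) ≤ a := fun i hi =>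
    (Real.sqrt_le_left ha).2 (hvar i hi)
  rw [hmax]
  refine hasCovDecay_of_lt (fun i hi => (hY i hi).sub (memLp_const _)) (fun i hi => ?_)
    fun i m hm him => (hcorr i m hm him).trans ?_
  · simp only [sq (Y i _ - _)]
    exact (hvar i hi).trans (le_mul_of_one_le_left (sq_nonneg _) (le_max_right _ _))
  · have hm' : (1 : ℝ) ≤ m := Nat.one_le_cast.2 hm
    have hi := hsd i (by omega)
    have hj := hsd (i + m) him
    calc C * (m : ℝ) ^ (-ρ) * √(variance' ℙ (Y i)) * √(variance' ℙ (Y (i + m)))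
        ≤ max C 1 * (m : ℝ) ^ (-r) * a * a := by gcongr; exact le_max_left C 1
      _ = max C 1 * a ^ 2 * (m : ℝ) ^ (-r) := by ring

theorem abs_integral_le_of_integral_sq_le {Y : Ω → ℝ} {a : ℝ} (hY : MemLp Y 2 ℙ) (ha : 0 ≤ a)
    (h : ∫ ω, Y ω ^ 2 ∂ℙ ≤ a ^ 2) : |∫ ω, Y ω ∂ℙ| ≤ a := by
  have hvar := ProbabilityTheory.variance_nonneg Y ℙ
  rw [ProbabilityTheory.variance_eq_sub hY] at hvar
  exact abs_le_of_sq_le_sq ((sub_nonneg.1 hvar).trans h) ha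

variable {E : Type*} [MeasurableSpace E] {F : Set (E → ℝ)}

/-- The Dirac mass at a random point `Y`, centred by the law of `Y`. -/
noncomputable def centredDirac (ℙ : Measure Ω) [IsProbabilityMeasure ℙ] (Y : Ω → E) (ω : Ω) :
    SignedMeasure E :=
  (Measure.dirac (Y ω)).toSignedMeasure - (ℙ.map Y).toSignedMeasure

theorem boundedIntegral_toSignedMeasure_sub (hmeas : ∀ f ∈ F, Measurable f) (f : boundedPart F)
    (A B : Measure E) [IsFiniteMeasure A] [IsFiniteMeasure B] :
    boundedIntegral hmeas f (A.toSignedMeasure - B.toSignedMeasure)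
      = ∫ x, f.1 x ∂A - ∫ x, f.1 x ∂B :=
  sIntegral_toSignedMeasure_sub A B
    (integrable_of_isBounded_range (hmeas f f.2.1) f.2.2 A)
    (integrable_of_isBounded_range (hmeas f f.2.1) f.2.2 B)

theorem abs_boundedIntegral_sub_le {ι : Type*} {P Q : ι → Measure E}
    [∀ i, IsProbabilityMeasure (P i)] [∀ i, IsProbabilityMeasure (Q i)]
    (hmeas : ∀ f ∈ F, Measurable f) (f : boundedPart F) (i : ι) :
    |boundedIntegral hmeas f ((P i).toSignedMeasure - (Q i).toSignedMeasure)|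
      ≤ 2 * secondMomentNorm P Q f := by
  have hLp := fun (μ : Measure E) [IsFiniteMeasure μ] =>
    memLp_of_isBounded_range (hmeas f f.2.1) f.2.2 2 μ
  have hnorm := secondMomentNorm_nonneg P Q f
  rw [boundedIntegral_toSignedMeasure_sub, two_mul]
  exact (abs_sub _ _).trans (add_le_add
    (abs_integral_le_of_integral_sq_le (hLp _) hnorm
      (integral_sq_left_le_secondMomentNorm_sq f.2.2 i))
    (abs_integral_le_of_integral_sq_le (hLp _) hnorm
      (integral_sq_right_le_secondMomentNorm_sq f.2.2 i)))

theorem boundedIntegral_centredDirac (hmeas : ∀ f ∈ F, Measurable f) (f : boundedPart F)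
    {Y : Ω → E} (hY : Measurable Y) (ω : Ω) :
    boundedIntegral hmeas f (centredDirac ℙ Y ω) = f.1 (Y ω) - ∫ ω', f.1 (Y ω') ∂ℙ := by
  have hf := hmeas f f.2.1
  rw [centredDirac, boundedIntegral_toSignedMeasure_sub,
    integral_dirac' _ _ hf.stronglyMeasurable,
    integral_map hY.aemeasurable hf.aestronglyMeasurable]

theorem hasCovDecay_boundedIntegral_centredDirac (hmeas : ∀ f ∈ F, Measurable f)
    (f : boundedPart F) {Y : ℕ → Ω → E} (hY : ∀ i, Measurable (Y i)) {n : ℕ} {a C ρ r : ℝ}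
    (ha : 0 ≤ a) (hsq : ∀ i < n, ∫ x, f.1 x ^ 2 ∂(ℙ.map (Y i)) ≤ a ^ 2) (hr : r ≤ ρ)
    (hcorr : HasCorrDecay ℙ (fun i ω => f.1 (Y i ω)) n C ρ) :
    HasCovDecay ℙ (fun i ω => boundedIntegral hmeas f (centredDirac ℙ (Y i) ω)) n
      ((√(max C 1) * a) ^ 2) r := by
  have hf := hmeas f f.2.1
  simp only [boundedIntegral_centredDirac hmeas f (hY _)]
  refine hcorr.hasCovDecay_sub_integral (fun i _ => ?_) ha (fun i hi => ?_) hr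
  · exact (memLp_of_isBounded_range hf f.2.2 2 (ℙ.map (Y i))).comp_of_map (hY i).aemeasurable
  · rw [← integral_map (hY i).aemeasurable (hf.pow_const 2).aestronglyMeasurable]
    exact hsq i hi

theorem exists_hasMaximalIncrements_sum_centredDirac {N : Seminorm ℝ (SignedMeasure E)}
    {d φ : (E → ℝ) → ℝ} {r : ℝ} (hF : F.Countable) (hmeas : ∀ f ∈ F, Measurable f)
    (hd : ∀ f : boundedPart F, 0 ≤ d f) (hφ : ∀ f, 0 ≤ φ f)
    (hsum : ∀ a, Summable fun f : boundedPart F => d f * (a * φ f))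
    (hN : ∀ ν, ENNReal.ofReal (N ν)
      ≤ weightedMoments (fun f : boundedPart F => d f) (boundedIntegral hmeas) ν)
    (hr0 : 0 ≤ r) (hr1 : r < 1) (C : ℝ) {ρ : ℝ} (hr : r ≤ ρ) :
    ∃ K, 0 ≤ K ∧ ∀ (n : ℕ) (Y : ℕ → Ω → E), (∀ i, Measurable (Y i)) →
      (∀ f ∈ boundedPart F, ∀ i < n, ∫ x, f x ^ 2 ∂(ℙ.map (Y i)) ≤ φ f ^ 2) →
      (∀ f ∈ F, HasCorrDecay ℙ (fun i ω => f (Y i ω)) n C ρ) →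
      HasMaximalIncrements ℙ N (fun j ω => ∑ i ∈ Finset.range j, centredDirac ℙ (Y i) ω) n K
        (1 - r / 2) := by
  have : Countable (boundedPart F) := (hF.mono (Set.sep_subset F _)).to_subtype
  have hφ' : ∀ f : boundedPart F, 0 ≤ √(max C 1) * φ f := fun f =>
    mul_nonneg (Real.sqrt_nonneg _) (hφ f)
  refine ⟨_, ?_, fun n Y hY hsq hcorr => hasMaximalIncrements_sum hN hd hφ' (hsum _) hr0 hr1
    fun f => hasCovDecay_boundedIntegral_centredDirac hmeas f hY (hφ f) (hsq f f.2) hr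
      (hcorr f f.2.1)⟩
  exact mul_nonneg zero_le_two (mul_nonneg (tsum_nonneg fun f => mul_nonneg (hd f) (hφ' f))
    (covDecayConst_nonneg hr1))

end EmpiricalMeasures

section Estimator

variable {V : Type*} [AddCommGroup V] [Module ℝ V] {n τ k : ℕ}

theorem sum_Icc_succ_eq_sub {M : Type*} [AddCommGroup M] (z : ℕ → M) (h : k ≤ n) :
    ∑ i ∈ Finset.Icc (k + 1) n, z i
      = ∑ i ∈ Finset.range n, z (i + 1) - ∑ i ∈ Finset.range k, z (i + 1) := by
  induction n, h using Nat.le_induction with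
  | base => rw [Finset.Icc_eq_empty (by omega), Finset.sum_empty, sub_self]
  | succ n hn ih =>
    rw [Finset.sum_Icc_succ_top (by omega), ih, Finset.sum_range_succ]
    abel

theorem changeSum_sum_sub {z p : ℕ → V} {P Q : V} (hp : ∀ i < n, p i = if i < τ then P else Q)
    (hk : k ≤ n) :
    changeSum (fun j => ∑ i ∈ Finset.range j, (z i - p i)) τ P Q k
      = ∑ i ∈ Finset.range k, z i := by
  induction k with
  | zero => simp [changeSum]
  | succ k ih =>
    have ih := ih (by omega)
    rcases lt_or_ge k τ with h | h
    · rw [changeSum_of_le _ _ _ h.le] at ih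
      rw [changeSum_of_le _ _ _ h, Finset.sum_range_succ, Finset.sum_range_succ _ k, ← ih,
        hp k hk, if_pos h]
      push_cast
      module
    · rw [changeSum_of_ge _ _ _ h] at ih
      rw [changeSum_of_ge _ _ _ (by omega), Finset.sum_range_succ, Finset.sum_range_succ _ k, ← ih,
        hp k hk, if_neg h.not_gt]
      push_cast
      module

theorem splitStat_changeSum_sum_sub (N : Seminorm ℝ V) (γ : ℝ) {z p : ℕ → V} {P Q : V}
    (hp : ∀ i < n, p i = if i < τ then P else Q) (hk : k ≤ n) :
    splitStat N γ n (changeSum (fun j => ∑ i ∈ Finset.range j, (z (i + 1) - p i)) τ P Q) k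
      = N ((((k : ℝ) / n) * (1 - (k : ℝ) / n)) ^ (1 - γ) •
        ((k : ℝ)⁻¹ • ∑ i ∈ Finset.Icc 1 k, z i
          - ((n : ℝ) - k)⁻¹ • ∑ i ∈ Finset.Icc (k + 1) n, z i)) := by
  rw [splitStat, changeSum_sum_sub hp hk, changeSum_sum_sub hp le_rfl, splitDiff,
    sum_Icc_succ_eq_sub z hk, ← zero_add 1, sum_Icc_succ_eq_sub z (Nat.zero_le k),
    Finset.sum_range_zero, sub_zero]

theorem toSignedMeasure_eq_ite_lt_natFloor {E : Type*} [MeasurableSpace E] {μ A B : Measure E}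
    [IsFiniteMeasure μ] [IsFiniteMeasure A] [IsFiniteMeasure B] {i : ℕ} {x : ℝ} (hx : 0 ≤ x)
    (h : μ = if ((i + 1 : ℕ) : ℝ) ≤ x then A else B) :
    μ.toSignedMeasure = if i < ⌊x⌋₊ then A.toSignedMeasure else B.toSignedMeasure := by
  simp only [← Nat.le_floor_iff hx] at h
  split_ifs at h ⊢
  · exact Measure.toSignedMeasure_congr h
  · omega
  · omega
  · exact Measure.toSignedMeasure_congr h

theorem splitStat_changeSum_sum_centredDirac {Ω E : Type*} [MeasurableSpace Ω] [MeasurableSpace E]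
    {ℙ : Measure Ω} [IsProbabilityMeasure ℙ] (N : Seminorm ℝ (SignedMeasure E)) (γ : ℝ)
    {Y : ℕ → Ω → E} {A B : Measure E} [IsFiniteMeasure A] [IsFiniteMeasure B] {x : ℝ} (hx : 0 ≤ x)
    (hlaw : ∀ i, 1 ≤ i → i ≤ n → ℙ.map (Y i) = if (i : ℝ) ≤ x then A else B) (hk : k ≤ n) (ω : Ω) :
    splitStat N γ n (changeSum (fun j => ∑ i ∈ Finset.range j, centredDirac ℙ (Y (i + 1)) ω) ⌊x⌋₊
        A.toSignedMeasure B.toSignedMeasure) k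
      = N ((((k : ℝ) / n) * (1 - (k : ℝ) / n)) ^ (1 - γ) •
        ((k : ℝ)⁻¹ • ∑ i ∈ Finset.Icc 1 k, (Measure.dirac (Y i ω)).toSignedMeasure
          - ((n : ℝ) - k)⁻¹ •
            ∑ i ∈ Finset.Icc (k + 1) n, (Measure.dirac (Y i ω)).toSignedMeasure)) := by
  simp only [centredDirac]
  exact splitStat_changeSum_sum_sub N γ (z := fun i => (Measure.dirac (Y i ω)).toSignedMeasure)
    (fun i hi => toSignedMeasure_eq_ite_lt_natFloor hx (hlaw (i + 1) (by omega) hi)) hk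

theorem sInf_argmax_mem (g : ℕ → ℝ) (hn : 1 < n) :
    sInf {k | k ∈ Finset.Ico 1 n ∧ ∀ j ∈ Finset.Ico 1 n, g j ≤ g k}
      ∈ {k | k ∈ Finset.Ico 1 n ∧ ∀ j ∈ Finset.Ico 1 n, g j ≤ g k} := by
  obtain ⟨k, hk, hmax⟩ :=
    Finset.exists_max_image (Finset.Ico 1 n) g ⟨1, Finset.mem_Ico.2 ⟨le_rfl, hn⟩⟩
  exact Nat.sInf_mem ⟨k, hk, hmax⟩

theorem isOp_sInf_argmax {Ω : Type*} [MeasurableSpace Ω] {ℙ : Measure Ω} {N : Seminorm ℝ V}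
    {P Q : ℕ → V} {S : ℕ → ℕ → Ω → V} {g : ℕ → ℕ → Ω → ℝ} {b : ℕ → ℝ} {γ θ r B K : ℝ}
    (hg : ∀ n k ω, 1 ≤ k → k < n →
      g n k ω = splitStat N γ n (changeSum (S n · ω) ⌊(n : ℝ) * θ⌋₊ (P n) (Q n)) k)
    (hS : ∀ n ω, S n 0 ω = 0) (h : ∀ n, HasMaximalIncrements ℙ N (S n) n K (1 - r / 2))
    (hK : 0 ≤ K) (hγ0 : 0 ≤ γ) (hγ1 : γ < 1) (hθ0 : 0 < θ) (hθ1 : θ < 1) (hb : ∀ n, 0 < b n)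
    (hbN : ∀ᶠ n in atTop, b n ≤ N (P n - Q n)) (hB : ∀ᶠ n in atTop, b n ≤ B)
    (hrate : Tendsto (fun n => (b n)⁻¹ * deviationRate γ r n) atTop (nhds 0)) :
    IsOp ℙ (fun n ω => (n : ℝ)⁻¹ *
      (sInf {k | k ∈ Finset.Ico 1 n ∧ ∀ j ∈ Finset.Ico 1 n, g n j ω ≤ g n k ω} : ℕ) - θ)
      (fun n => (n : ℝ)⁻¹ * b n ^ (-(2 / r))) := by
  refine isOp_argmax_splitStat hS h hK hγ0 hγ1 hθ0 hθ1 hb hbN hB hrate fun n hn ω => ?_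
  have hmem := sInf_argmax_mem (fun k => g n k ω) hn
  refine ⟨hmem.1, fun j hj => ?_⟩
  rw [← hg n j ω (Finset.mem_Ico.1 hj).1 (Finset.mem_Ico.1 hj).2,
    ← hg n _ ω (Finset.mem_Ico.1 hmem.1).1 (Finset.mem_Ico.1 hmem.1).2]
  exact hmem.2 j hj

theorem eventually_lt_of_tendsto_measure_const_le {Ω : Type*} [MeasurableSpace Ω] {ℙ : Measure Ω}
    [IsProbabilityMeasure ℙ] {a b : ℕ → ℝ}
    (h : Tendsto (fun n => ℙ {_ω | a n ≤ b n}) atTop (nhds 0)) : ∀ᶠ n in atTop, b n < a n := by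
  filter_upwards [h.eventually (gt_mem_nhds zero_lt_one)] with n hn
  by_contra! hab
  simp [hab] at hn

end Estimator

/-- **Theorem 1** (rate of convergence of the nonparametric change-point estimator,
countable family, difference of distributions possibly tending to zero). -/
theorem changePoint_rate_countable_family
    {Ω : Type*} [MeasurableSpace Ω] (ℙ : Measure Ω) [IsProbabilityMeasure ℙ]
    {E : Type*} [MeasurableSpace E]
    -- the change point and the exponent of the weight
    (θ γ : ℝ) (hθ0 : 0 < θ) (hθ1 : θ < 1) (hγ0 : 0 ≤ γ) (hγ1 : γ < 1)
    -- the observations and their marginal laws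
    (X : ℕ → ℕ → Ω → E) (hXmeas : ∀ n i, Measurable (X n i))
    (P Q : ℕ → Measure E) [∀ n, IsProbabilityMeasure (P n)] [∀ n, IsProbabilityMeasure (Q n)]
    (hlaw : ∀ n i, 1 ≤ i → i ≤ n →
      Measure.map (X n i) ℙ = if (i : ℝ) ≤ (n : ℝ) * θ then P n else Q n)
    -- the seminorm on the space of finite signed measures
    (N : SignedMeasure E → ℝ)
    (hN_smul : ∀ (a : ℝ) (ν : SignedMeasure E), N (a • ν) = |a| * N ν)
    (hN_add : ∀ ν₁ ν₂ : SignedMeasure E, N (ν₁ + ν₂) ≤ N ν₁ + N ν₂)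
    -- the weighted difference of empirical measures `D_k` (for `1 ≤ k < n`)
    (D : ℕ → ℕ → Ω → SignedMeasure E)
    (hD : ∀ n k ω, 1 ≤ k → k < n →
      D n k ω = (((k : ℝ) / n) * (1 - (k : ℝ) / n)) ^ ((1 : ℝ) - γ) •
        ((k : ℝ)⁻¹ • ∑ i ∈ Finset.Icc 1 k, (Measure.dirac (X n i ω)).toSignedMeasure
          - ((n : ℝ) - k)⁻¹ •
              ∑ i ∈ Finset.Icc (k + 1) n, (Measure.dirac (X n i ω)).toSignedMeasure))
    -- the estimator: `1/n` times the smallest maximizer of `N(D_k)` over `1 ≤ k < n`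
    (θhat : ℕ → Ω → ℝ)
    (hθhat : ∀ n ω, θhat n ω = (n : ℝ)⁻¹ *
      ((sInf {k : ℕ | k ∈ Finset.Ico 1 n ∧
        ∀ j ∈ Finset.Ico 1 n, N (D n j ω) ≤ N (D n k ω)} : ℕ) : ℝ))
    -- the countable family `F`, the weights `d(f)` and the norms `‖f‖`
    (F : Set (E → ℝ)) (hFcount : F.Countable) (hFmeas : ∀ f ∈ F, Measurable f)
    (normF : (E → ℝ) → ℝ)
    (hnormF : ∀ f : E → ℝ, normF f =
      ⨆ n : ℕ, Real.sqrt ((∫ x, f x ^ 2 ∂(P n)) + ∫ x, f x ^ 2 ∂(Q n)))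
    (d : (E → ℝ) → ℝ) (hd : ∀ f ∈ F, 0 < d f)
    (hdsum : Summable fun f : F => d f * normF f)
    -- condition (2.9): the seminorm is dominated by the weighted moments
    (hNle : ∀ ν : SignedMeasure E, N ν ≤ ∑' f : F, d f * |sIntegral ν f|)
    -- Assumption 1: algebraic decay of correlations, uniformly over `F`
    (C ρ : ℝ) (hC : 0 < C) (hρ : 0 < ρ)
    (hA1 : ∀ f ∈ F, ∀ n i m : ℕ, 1 ≤ i → 1 ≤ m → i + m ≤ n →
      |covar ℙ (fun ω => f (X n i ω)) (fun ω => f (X n (i + m) ω))| ≤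
        C * (m : ℝ) ^ (-ρ) *
          Real.sqrt (variance' ℙ fun ω => f (X n i ω)) *
          Real.sqrt (variance' ℙ fun ω => f (X n (i + m) ω)))
    -- `ρ̄ = min (1 - ε) ρ` for an arbitrarily small fixed `ε > 0`
    (ε : ℝ) (hε : 0 < ε)
    -- condition (2.10) on the sequence `b_n`
    (b : ℕ → ℝ) (hb : ∀ n, 0 < b n)
    (h210 : Tendsto (fun n =>
      ℙ {ω | N ((P n).toSignedMeasure - (Q n).toSignedMeasure) ≤ b n}) atTop (nhds 0))
    -- condition (2.11)
    (h211 : Tendsto (fun n : ℕ => (b n)⁻¹ *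
      ((n : ℝ) ^ (-(min (1 - ε) ρ) / 2) *
          (1 + Real.log n * (if γ - 1 + min (1 - ε) ρ / 2 = 0 then (1 : ℝ) else 0)) +
        (n : ℝ) ^ (γ - 1))) atTop (nhds 0)) :
    -- conclusion (2.12): `θ̂_n − θ = O_p(n⁻¹ b_n^{−2/ρ̄})`
    IsOp ℙ (fun n ω => θhat n ω - θ)
      (fun n => (n : ℝ)⁻¹ * b n ^ (-(2 / min (1 - ε) ρ))) := by
  obtain ⟨N, rfl⟩ : ∃ N' : Seminorm ℝ (SignedMeasure E), ⇑N' = N :=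
    ⟨.of N hN_add hN_smul, rfl⟩
  obtain rfl : normF = secondMomentNorm P Q := funext hnormF
  have hsum : ∀ a, Summable fun f : boundedPart F => d f * (a * secondMomentNorm P Q f) := fun a =>
    ((hdsum.comp_injective (Set.inclusion_injective (Set.sep_subset F _))).mul_left a).congr
      fun f => mul_left_comm _ _ _
  have hN := ofReal_seminorm_le_weightedMoments_boundedPart N hFcount hFmeas
    (fun f hf => (hd f hf).le) hNle
  have hd0 : ∀ f : boundedPart F, 0 ≤ d f := fun f => (hd f f.2.1).le
  have hbN := eventually_lt_of_tendsto_measure_const_le h210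
  have hB := hbN.mono fun n hn => hn.le.trans <|
    seminorm_le_tsum (hN _) hd0 (hsum 2) fun f => abs_boundedIntegral_sub_le hFmeas f n
  obtain ⟨K, hK, hmax⟩ := exists_hasMaximalIncrements_sum_centredDirac (ℙ := ℙ) hFcount hFmeas hd0
    (secondMomentNorm_nonneg P Q) hsum hN (pos_of_tendsto_inv_mul_deviationRate hb hB h211).le
    ((min_le_left _ _).trans_lt (sub_lt_self 1 hε)) C (min_le_right _ _)
  have hX := fun n => hmax n (fun i => X n (i + 1)) (fun i => hXmeas n (i + 1))
    (fun f hf i hi => integral_sq_le_secondMomentNorm_sq_of_eq_ite hf.2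
      (hlaw n (i + 1) (by omega) hi))
    (fun f hf i m hm him => by
      simpa only [add_right_comm] using hA1 f hf n (i + 1) m (by omega) hm (by omega))
  simp only [hθhat]
  exact isOp_sInf_argmax (g := fun n k ω => N (D n k ω)) (fun n k ω hk hkn =>
      (congrArg N (hD n k ω hk hkn)).trans
        (splitStat_changeSum_sum_centredDirac N γ (by positivity) (hlaw n) hkn.le ω).symm)
    (fun n ω => Finset.sum_range_zero _) hX hK hγ0 hγ1 hθ0 hθ1 hb (hbN.mono fun n => le_of_lt) hB
    h211
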